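/- arXiv:1411.4796 — 3 statements merged into one kernel-verified Lean document; each statement's English description precedes it below -/
import Mathlib

section
/- It is undecidable whether Attacker has a winning strategy in the Word Game on pairs of group words when the initial position is the pair of empty words (1, 1): the predicate on encoded instances (Attacker's finite list of pairs in F₂ × F₁ and Defender's finite list of pairs in F₂ × F₁ with identity second components, the initial configuration being fixed as (1, 1)) asserting that Attacker has a winning strategy is not a computable predicate. -/
/-- The free group on two generators `c, d`. -/
abbrev F2 : Type := FreeGroup Bool

/-- The free group on one generator `ρ`. -/
abbrev F1 : Type := FreeGroup Unit

/-- A word over the binary group alphabet `{c, d, c̄, d̄}`. -/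
abbrev BWord : Type := List (Bool × Bool)

/-- A word over the unary group alphabet `{ρ, ρ̄}`. -/
abbrev UWord : Type := List (Unit × Bool)

/-- An encoded instance of the Word Game on pairs with initial position `(1, 1)`:
Attacker's finite list of pairs of words `(u_i, u_i')` and Defender's finite list of words
`v_j` (their second components being the identity). -/
abbrev WGInstance : Type := List (BWord × UWord) × List BWord

/-- The configuration after `k` rounds of the Word Game on pairs, starting from `w0`, when
Defender plays the sequence of moves `δ` and Attacker follows the strategy `st` (a function
of the finite history of Defender's choices so far); moves act by componentwise right
multiplication. -/
def wgPos (w0 : F2 × F1) (δ : ℕ → F2 × F1) (st : List (F2 × F1) → F2 × F1) : ℕ → F2 × F1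
  | 0 => w0
  | k + 1 => wgPos w0 δ st k * δ k * st ((List.range (k + 1)).map δ)

/-- Attacker has a winning strategy in the Word Game on pairs with Attacker's list `A`,
Defender's list `D` and initial pair `w0`: there is a strategy, choosing a move from `A`
for every finite history of Defender's moves, such that every infinite play consistent with
it reaches the pair `(1, 1)` of empty words after some Attacker move. -/
def WGAttackerWins (A D : List (F2 × F1)) (w0 : F2 × F1) : Prop :=
  ∃ st : List (F2 × F1) → F2 × F1,
    (∀ hist, (∀ x ∈ hist, x ∈ D) → st hist ∈ A) ∧
    ∀ δ : ℕ → F2 × F1, (∀ i, δ i ∈ D) → ∃ n, wgPos w0 δ st (n + 1) = 1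


/-! ### Part 1: the game in terms of positions -/

/-- Attacker can win within `n` rounds from a position with Defender to move. -/
def AWn (A D : List (F2 × F1)) : ℕ → F2 × F1 → Prop
  | 0, _ => False
  | n + 1, g => ∀ d ∈ D, ∃ u ∈ A, g * d * u = 1 ∨ AWn A D n (g * d * u)

theorem AWn.succ {A D : List (F2 × F1)} {n : ℕ} {g : F2 × F1} (h : AWn A D n g) :
    AWn A D (n + 1) g := by
  induction n generalizing g with
  | zero => exact h.elim
  | succ n ih =>
    intro d hd
    obtain ⟨u, hu, h1⟩ := h d hd
    exact ⟨u, hu, h1.imp id ih⟩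

theorem AWn.mono {A D : List (F2 × F1)} {n m : ℕ} (hnm : n ≤ m) {g : F2 × F1}
    (h : AWn A D n g) : AWn A D m g := by
  induction hnm with
  | refl => exact h
  | step _ ih => exact ih.succ

/-- The winning region for Attacker (positions with Defender to move). -/
def AW (A D : List (F2 × F1)) (g : F2 × F1) : Prop := ∃ n, AWn A D n g

theorem AW.intro {A D : List (F2 × F1)} {g : F2 × F1}
    (h : ∀ d ∈ D, ∃ u ∈ A, g * d * u = 1 ∨ AW A D (g * d * u)) : AW A D g := by
  have h' : ∀ D' : List (F2 × F1), (∀ d ∈ D', d ∈ D) →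
      ∃ n, ∀ d ∈ D', ∃ u ∈ A, g * d * u = 1 ∨ AWn A D n (g * d * u) := by
    intro D'
    induction D' with
    | nil => intro _; exact ⟨0, by simp⟩
    | cons d D' ih =>
      intro hD'
      obtain ⟨n, hn⟩ := ih (fun x hx => hD' x (List.mem_cons_of_mem _ hx))
      obtain ⟨u, hu, hu'⟩ := h d (hD' d List.mem_cons_self)
      have : ∃ m, g * d * u = 1 ∨ AWn A D m (g * d * u) := by
        rcases hu' with hu' | ⟨m, hm⟩
        · exact ⟨0, Or.inl hu'⟩
        · exact ⟨m, Or.inr hm⟩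
      obtain ⟨m, hm⟩ := this
      refine ⟨max n m, fun x hx => ?_⟩
      rcases List.mem_cons.1 hx with rfl | hx
      · exact ⟨u, hu, hm.imp id (AWn.mono (le_max_right _ _))⟩
      · obtain ⟨u, hu, h1⟩ := hn x hx
        exact ⟨u, hu, h1.imp id (AWn.mono (le_max_left _ _))⟩
  obtain ⟨n, hn⟩ := h' D (fun _ h => h)
  exact ⟨n + 1, hn⟩

theorem AW.wins {A D : List (F2 × F1)} (hA : A ≠ []) {w0 : F2 × F1} (h : AW A D w0) :
    WGAttackerWins A D w0 := by
  classical
  have hc : ∀ g d : F2 × F1, ∃ u ∈ A, d ∈ D → ∀ n, AWn A D (n + 1) g →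
      (g * d * u = 1 ∨ AWn A D n (g * d * u)) := by
    intro g d
    obtain ⟨u0, hu0⟩ := List.exists_mem_of_ne_nil A hA
    by_cases hd : d ∈ D
    · by_cases hx : ∃ n, AWn A D (n + 1) g
      · obtain ⟨u, hu, h1⟩ := Nat.find_spec hx d hd
        refine ⟨u, hu, fun _ n hn => h1.imp id (AWn.mono (Nat.find_min' hx hn))⟩
      · exact ⟨u0, hu0, fun _ n hn => absurd ⟨n, hn⟩ hx⟩
    · exact ⟨u0, hu0, fun h => absurd h hd⟩
  choose c hcA hc using hc
  let pos : List (F2 × F1) → F2 × F1 := fun l => l.foldl (fun g d => g * d * c g d) w0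
  let st : List (F2 × F1) → F2 × F1 := fun l => c (pos l.dropLast) (l.getLastD 1)
  refine ⟨st, fun _ _ => hcA _ _, fun δ hδ => ?_⟩
  have hpos : ∀ k, wgPos w0 δ st k = pos ((List.range k).map δ) := by
    intro k
    induction k with
    | zero => rfl
    | succ k ih =>
      simp only [wgPos]
      rw [ih]
      simp [pos, st, List.range_succ]
  have hstep : ∀ k, wgPos w0 δ st (k + 1) =
      wgPos w0 δ st k * δ k * c (wgPos w0 δ st k) (δ k) := by
    intro k
    rw [hpos, hpos]
    simp [pos, List.range_succ]
  have main : ∀ n g, AWn A D n g → ∀ k, wgPos w0 δ st k = g → ∃ m, wgPos w0 δ st (m + 1) = 1 := by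
    intro n
    induction n with
    | zero => intro g hg; exact hg.elim
    | succ n ih =>
      intro g hg k hk
      have h2 := hstep k
      rw [hk] at h2
      rcases hc g (δ k) (hδ k) n hg with h1 | h1
      · exact ⟨k, h2.trans h1⟩
      · exact ih _ h1 (k + 1) h2
  obtain ⟨n, hn⟩ := h
  exact main n w0 hn 0 rfl

theorem not_wins_of_inv {A D : List (F2 × F1)} (Inv : F2 × F1 → Prop) {w0 : F2 × F1}
    (h0 : Inv w0)
    (hI : ∀ g, Inv g → ∃ d ∈ D, ∀ u ∈ A, g * d * u ≠ 1 ∧ Inv (g * d * u)) :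
    ¬ WGAttackerWins A D w0 := by
  classical
  rintro ⟨st, hst, hw⟩
  obtain ⟨d0, hd0, -⟩ := hI w0 h0
  have hch : ∀ g, ∃ d ∈ D, Inv g → ∀ u ∈ A, g * d * u ≠ 1 ∧ Inv (g * d * u) := by
    intro g
    by_cases hg : Inv g
    · obtain ⟨d, hd, h⟩ := hI g hg
      exact ⟨d, hd, fun _ => h⟩
    · exact ⟨d0, hd0, fun h => absurd h hg⟩
  choose e heD he using hch
  -- state: (history, position)
  let S : ℕ → List (F2 × F1) × (F2 × F1) := fun k => Nat.rec ([], w0)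
    (fun _ s => (s.1 ++ [e s.2], s.2 * e s.2 * st (s.1 ++ [e s.2]))) k
  have hS : ∀ k, S (k + 1) = ((S k).1 ++ [e (S k).2],
    (S k).2 * e (S k).2 * st ((S k).1 ++ [e (S k).2])) := fun k => rfl
  let δ : ℕ → F2 × F1 := fun k => e (S k).2
  have hhist : ∀ k, (S k).1 = (List.range k).map δ := by
    intro k
    induction k with
    | zero => rfl
    | succ k ih => rw [hS]; simp only [List.range_succ, List.map_append, ← ih]; rfl
  have hpos : ∀ k, wgPos w0 δ st k = (S k).2 := by
    intro k
    induction k with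
    | zero => rfl
    | succ k ih =>
      rw [hS]
      simp only [wgPos]
      rw [ih, hhist k]
      simp [List.range_succ, δ]
  have hmem : ∀ k, st ((S k).1 ++ [e (S k).2]) ∈ A := by
    intro k
    apply hst
    intro x hx
    rw [hhist] at hx
    simp only [List.mem_append, List.mem_map, List.mem_singleton] at hx
    rcases hx with ⟨i, -, rfl⟩ | rfl
    · exact heD _
    · exact heD _
  have hinv : ∀ k, Inv (S k).2 := by
    intro k
    induction k with
    | zero => exact h0
    | succ k ih => rw [hS]; exact (he _ ih _ (hmem k)).2
  obtain ⟨n, hn⟩ := hw δ (fun i => heD _)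
  rw [hpos, hS] at hn
  exact (he _ (hinv n) _ (hmem n)).1 hn

/-! ### Part 2: embedding of free groups -/

/-- The automorphism of `FreeGroup ℤ` shifting generators. -/
def shiftAut : Multiplicative ℤ →* MulAut (FreeGroup ℤ) where
  toFun k := FreeGroup.freeGroupCongr (Equiv.addLeft k.toAdd)
  map_one' := by
    ext x
    simp
  map_mul' a b := by
    apply MulEquiv.toMonoidHom_injective
    ext x
    simp [add_assoc]

/-- The embedding `x_i ↦ c^i d c^{-i}` of `FreeGroup ℤ` in `F2`. -/
def embZ : FreeGroup ℤ →* F2 :=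
  FreeGroup.lift fun i => FreeGroup.of true ^ i * FreeGroup.of false * (FreeGroup.of true ^ i)⁻¹

theorem embZ_injective : Function.Injective embZ := by
  let ψ : F2 →* FreeGroup ℤ ⋊[shiftAut] Multiplicative ℤ :=
    FreeGroup.lift fun b => if b then SemidirectProduct.inr (Multiplicative.ofAdd 1)
      else SemidirectProduct.inl (FreeGroup.of 0)
  have h : ψ.comp embZ = SemidirectProduct.inl := by
    ext1 i
    simp only [ψ, embZ, MonoidHom.comp_apply, FreeGroup.lift_apply_of, map_mul, map_zpow, map_inv,
      if_true]
    have h1 : FreeGroup.of i = shiftAut (Multiplicative.ofAdd i) (FreeGroup.of 0) := by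
      simp [shiftAut]
    have h2 : (Multiplicative.ofAdd i) = (Multiplicative.ofAdd (1 : ℤ)) ^ i := by
      rw [← ofAdd_zsmul]; simp
    rw [h1, SemidirectProduct.inl_aut, h2]
    simp
  intro x y hxy
  have : ψ.comp embZ x = ψ.comp embZ y := by simp [hxy]
  rw [h] at this
  exact SemidirectProduct.inl_injective this

/-- Embedding of a finitely generated free group and of `ℤ` in the configuration group. -/
theorem exists_emb (X : Type) [Countable X] : ∃ φ : FreeGroup X →* F2, Function.Injective φ := by
  obtain ⟨f, hf⟩ := exists_injective_nat X
  refine ⟨embZ.comp (FreeGroup.map fun x => (f x : ℤ)), ?_⟩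
  refine embZ_injective.comp (FreeGroup.map_injective ?_)
  intro a b h
  exact hf (by simpa using h)

/-- The powers of the generator of `F1`. -/
theorem rho_zpow_eq_one {k : ℤ} (h : (FreeGroup.of () : F1) ^ k = 1) : k = 0 := by
  have := congrArg FreeGroup.freeGroupUnitEquivInt h
  simpa using this

theorem rho_replicate (k : ℕ) :
    (FreeGroup.mk (List.replicate k ((), false)) : F1) = FreeGroup.of () ^ (-(k : ℤ)) := by
  induction k with
  | zero => rfl
  | succ k ih =>
    rw [List.replicate_succ', ← FreeGroup.mul_mk, ih]
    have : (FreeGroup.mk [((), false)] : F1) = (FreeGroup.of ())⁻¹ := rfl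
    rw [this, ← zpow_neg_one, ← zpow_add]
    congr 1
    push_cast
    ring

/-! ### Part 3: last letters of reduced words -/

section LastLetter

open Classical in
/-- The last letter of the reduced word of a free group element. -/
noncomputable def lastL {X : Type} (g : FreeGroup X) : Option (X × Bool) := g.toWord.getLast?

theorem lastL_eq {X : Type} [DecidableEq X] (g : FreeGroup X) :
    lastL g = g.toWord.getLast? := by
  unfold lastL
  congr!

theorem lastL_one {X : Type} : lastL (1 : FreeGroup X) = none := by
  simp [lastL]

theorem toWord_mul_of_reduced {X : Type} [DecidableEq X] (g h : FreeGroup X)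
    (H : FreeGroup.IsReduced (g.toWord ++ h.toWord)) : (g * h).toWord = g.toWord ++ h.toWord := by
  rw [FreeGroup.toWord_mul, H.reduce_eq]

theorem toWord_mul_of_last {X : Type} [DecidableEq X] (g h : FreeGroup X)
    (H : ∀ x ∈ g.toWord.getLast?, ∀ y ∈ h.toWord.head?, x.1 = y.1 → x.2 = y.2) :
    (g * h).toWord = g.toWord ++ h.toWord := by
  apply toWord_mul_of_reduced
  unfold FreeGroup.IsReduced
  rw [List.isChain_append]
  exact ⟨FreeGroup.isReduced_toWord, FreeGroup.isReduced_toWord, H⟩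

/-- Appending a positive letter that does not cancel. -/
theorem lastL_mul_of {X : Type} (g : FreeGroup X) (x : X) (h : lastL g ≠ some (x, false)) :
    lastL (g * FreeGroup.of x) = some (x, true) := by
  classical
  simp only [lastL_eq] at *
  rw [toWord_mul_of_last]
  · simp [FreeGroup.toWord_of]
  · rintro ⟨a, b⟩ ha y hy hab
    simp [FreeGroup.toWord_of] at hy
    subst hy
    simp at hab
    subst hab
    cases b
    · exact absurd ha h
    · rfl

/-- Appending a negative letter that does not cancel. -/
theorem lastL_mul_inv {X : Type} (g : FreeGroup X) (x : X) (h : lastL g ≠ some (x, true)) :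
    lastL (g * (FreeGroup.of x)⁻¹) = some (x, false) := by
  classical
  have hw : ((FreeGroup.of x)⁻¹ : FreeGroup X).toWord = [(x, false)] := by
    rw [FreeGroup.toWord_inv, FreeGroup.toWord_of]; rfl
  simp only [lastL_eq] at *
  rw [toWord_mul_of_last]
  · rw [hw]; simp
  · rintro ⟨a, b⟩ ha y hy hab
    rw [hw] at hy
    simp at hy
    subst hy
    simp at hab
    subst hab
    cases b
    · rfl
    · exact absurd ha h

/-- Appending a word over the stack letters. -/
theorem lastL_mul_stack {Y Z : Type} (g : FreeGroup (Y ⊕ Z)) (k : FreeGroup Y)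
    (h : ∀ y b, lastL g ≠ some (Sum.inl y, b)) :
    (k = 1 ∧ lastL (g * FreeGroup.map Sum.inl k) = lastL g) ∨
      ∃ y b, lastL (g * FreeGroup.map Sum.inl k) = some (Sum.inl y, b) := by
  classical
  by_cases hk : k = 1
  · left; subst hk; simp
  right
  have hw : (FreeGroup.map Sum.inl k : FreeGroup (Y ⊕ Z)).toWord =
      k.toWord.map fun x => (Sum.inl x.1, x.2) := by
    conv_lhs => rw [← FreeGroup.mk_toWord (x := k)]
    rw [FreeGroup.map.mk, FreeGroup.toWord_mk]
    apply FreeGroup.IsReduced.reduce_eq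
    unfold FreeGroup.IsReduced
    rw [List.isChain_map]
    have := FreeGroup.isReduced_toWord (x := k)
    unfold FreeGroup.IsReduced at this
    refine this.imp ?_
    intro a b hab h
    exact hab (Sum.inl_injective h)
  have hne : k.toWord ≠ [] := by
    simpa [FreeGroup.toWord_eq_nil_iff] using hk
  simp only [lastL_eq] at *
  rw [toWord_mul_of_last, hw]
  · rw [List.getLast?_append_of_ne_nil _ (by simpa using hne), List.getLast?_map,
      List.getLast?_eq_getLast_of_ne_nil hne]
    exact ⟨_, _, rfl⟩
  · rintro ⟨a, b⟩ ha y hy hab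
    rw [hw] at hy
    rw [List.head?_map, Option.mem_map] at hy
    obtain ⟨y0, -, rfl⟩ := hy
    simp at hab
    subst hab
    exact absurd ha (h _ _)

theorem ne_one_of_lastL {X : Type} {g : FreeGroup X} {x : X × Bool} (h : lastL g = some x) :
    g ≠ 1 := by
  rintro rfl
  simp [lastL_one] at h

end LastLetter

set_option linter.unusedSectionVars false

/-! ### Part 4: the abstract game checking a cellular automaton -/

/-- Defender's letters: three directions and the start letter. -/
inductive Dl : Type
  | L | M | R | S
  deriving DecidableEq

instance : Fintype Dl := ⟨{.L, .M, .R, .S}, by intro x; cases x <;> simp⟩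

/-- The displacement denoted by a Defender letter. -/
def Dl.del : Dl → ℤ
  | .L => -1
  | .M => 0
  | .R => 1
  | .S => 0

/-- State letters. -/
inductive St (C : Type) : Type
  | B : St C
  | T (l m r : C) : St C
  | P : St C
  | N : St C
  | E : St C

/-- The entry of a triple selected by a Defender letter. -/
def Dl.sel {C : Type} : Dl → C → C → C → C
  | .L, l, _, _ => l
  | .M, _, m, _ => m
  | .R, _, _, r => r
  | .S, _, m, _ => m

/-- All letters: two stack letters, states, Defender letters. -/
abbrev XL (C : Type) : Type := Bool ⊕ (St C ⊕ Dl)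

/-- The group of stack contents. -/
abbrev HG : Type := FreeGroup Bool

/-- The inclusion of the stack group. -/
def stk {C : Type} : HG →* FreeGroup (XL C) := FreeGroup.map Sum.inl

/-- Group element of a state letter. -/
def stL {C : Type} (q : St C) : FreeGroup (XL C) := FreeGroup.of (Sum.inr (Sum.inl q))

/-- Group element of a Defender letter. -/
def dl {C : Type} (d : Dl) : FreeGroup (XL C) := FreeGroup.of (Sum.inr (Sum.inr d))

/-- The stack letter counting time. -/
def aL : HG := FreeGroup.of true

/-- The stack letter used for draining. -/
def bL : HG := FreeGroup.of false

/-- Weighted exponent sum. -/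
def expo (v : Bool → ℤ) (h : HG) : ℤ :=
  Multiplicative.toAdd (FreeGroup.lift (fun y => Multiplicative.ofAdd (v y)) h)

@[simp] theorem expo_one (v : Bool → ℤ) : expo v 1 = 0 := by simp [expo]

@[simp] theorem expo_mul (v : Bool → ℤ) (g h : HG) : expo v (g * h) = expo v g + expo v h := by
  simp [expo]

@[simp] theorem expo_inv (v : Bool → ℤ) (g : HG) : expo v g⁻¹ = - expo v g := by
  simp [expo]

@[simp] theorem expo_aL (v : Bool → ℤ) : expo v aL = v true := by
  simp [expo, aL]

@[simp] theorem expo_bL (v : Bool → ℤ) : expo v bL = v false := by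
  simp [expo, bL]

/-- Exponent sum of `a`. -/
abbrev alphaE (h : HG) : ℤ := expo (fun y => if y then 1 else 0) h

/-- Total exponent sum. -/
abbrev chiE (h : HG) : ℤ := expo (fun _ => 1) h

section CAGame

variable {C : Type} [Inhabited C] (f : C → C → C → C) (halt : C → Prop) (l : List C)

/-- The initial configuration of the automaton. -/
def initC (i : ℤ) : C := if 0 ≤ i then l.getI i.toNat else default

/-- The space-time diagram of the automaton. -/
def cellC : ℕ → ℤ → C
  | 0, p => initC l p
  | t + 1, p => f (cellC t (p - 1)) (cellC t p) (cellC t (p + 1))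

/-- State transitions available to Attacker. -/
inductive Rule : St C → Dl → HG → ℤ → St C → Prop
  | push (d : Dl) (e : Dl) : Rule .B d aL e.del .B
  | guess (d : Dl) (x y z : C) (h : halt y) : Rule .B d 1 0 (.T x y z)
  | back (d : Dl) (x y z x' y' z' : C) (h : f x' y' z' = d.sel x y z) :
      Rule (.T x y z) d aL⁻¹ d.del (.T x' y' z')
  | inp (d : Dl) (x y z : C) (i : ℕ) (hi : i < l.length) (h : d.sel x y z = l.getI i) :
      Rule (.T x y z) d 1 (d.del - i) .E
  | pos (d : Dl) (x y z : C) (h : d.sel x y z = default) :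
      Rule (.T x y z) d 1 (d.del - l.length) .P
  | neg (d : Dl) (x y z : C) (h : d.sel x y z = default) :
      Rule (.T x y z) d 1 (d.del + 1) .N
  | pp (d : Dl) : Rule .P d bL (-1) .P
  | pe (d : Dl) : Rule .P d 1 0 .E
  | nn (d : Dl) : Rule .N d bL 1 .N
  | ne (d : Dl) : Rule .N d 1 0 .E
  | ee (d : Dl) : Rule .E d bL⁻¹ 0 .E

/-- Attacker's moves. -/
inductive Mv : FreeGroup (XL C) → ℤ → Prop
  | skip (d : Dl) (h : d ≠ .S) : Mv ((dl d)⁻¹) 0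
  | start : Mv ((dl .S)⁻¹ * stL .B) 0
  | step (q : St C) (d : Dl) (η : HG) (w : ℤ) (q' : St C) (h : Rule f halt l q d η w q') :
      Mv ((dl d)⁻¹ * ((stL q)⁻¹ * stk η * stL q')) w
  | fin (d : Dl) : Mv ((dl d)⁻¹ * (stL .E)⁻¹) 0

/-- Rank of a state. -/
def rkS : St C → ℕ
  | .B => 0
  | .T _ _ _ => 1
  | .P => 2
  | .N => 2
  | .E => 3

/-- Sign of the stack change within a given rank. -/
def sgR (n : ℕ) : ℤ := if n % 2 = 0 then 1 else -1

/-- Constraint on virtual runs from `q0` to `q` with net stack change `h`. -/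
def RR (q0 : St C) (h : HG) (q : St C) : Prop :=
  rkS q0 < rkS q ∨ (rkS q0 = rkS q ∧ 0 < sgR (rkS q) * chiE h)

theorem RR.irrefl (q : St C) : ¬ RR q 1 q := by
  simp [RR]

theorem RR.trans {q0 q q' : St C} {h η : HG} (h1 : RR q0 h q) (h2 : RR q η q') :
    RR q0 (h * η) q' := by
  rcases h1 with h1 | ⟨h1, h1'⟩ <;> rcases h2 with h2 | ⟨h2, h2'⟩
  · exact Or.inl (h1.trans h2)
  · exact Or.inl (h2 ▸ h1)
  · exact Or.inl (h1 ▸ h2)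
  · refine Or.inr ⟨h1.trans h2, ?_⟩
    rw [h2] at h1'
    have h3 : chiE (h * η) = chiE h + chiE η := expo_mul _ _ _
    rw [h3, mul_add]
    linarith

variable {f halt l}

theorem Rule.rr {q : St C} {d : Dl} {η : HG} {w : ℤ} {q' : St C}
    (h : Rule f halt l q d η w q') : RR q η q' := by
  cases h <;> simp [RR, rkS, sgR]

/-- Words ending with a negative letter different from the inverse of `e`. -/
def NegE (e : Dl) (n : FreeGroup (XL C)) : Prop :=
  ∃ y, lastL n = some (Sum.inr y, false) ∧ y ≠ Sum.inr e

/-- Positions that are lost for Attacker when Defender always plays `e`. -/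
def Dead (e : Dl) (g : FreeGroup (XL C)) : Prop :=
  (∃ n h, NegE e n ∧ g = n * stk h) ∨
  (∃ n h q, NegE e n ∧ (∀ q0, lastL n = some (Sum.inr (Sum.inl q0), false) → RR q0 h q) ∧
    g = n * stk h * stL q)

/-- Words after which negative state letters and `e` do not cancel. -/
def Clean (e : Dl) (g : FreeGroup (XL C)) : Prop :=
  lastL g ≠ some (Sum.inr (Sum.inr e), false) ∧ ∀ q, lastL g ≠ some (Sum.inr (Sum.inl q), true)

theorem clean_stk (e : Dl) (h : HG) : Clean e (stk h : FreeGroup (XL C)) := by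
  have := lastL_mul_stack (1 : FreeGroup (XL C)) h (by simp [lastL_one])
  rw [one_mul] at this
  unfold stk Clean
  rcases this with ⟨-, h1⟩ | ⟨y, b, h1⟩ <;> simp [h1, lastL_one]

theorem NegE.cases {e : Dl} {n : FreeGroup (XL C)} (hn : NegE e n) (h : HG) :
    (h = 1 ∧ lastL (n * stk h) = lastL n) ∨ ∃ y b, lastL (n * stk h) = some (Sum.inl y, b) := by
  obtain ⟨y, hy, -⟩ := hn
  exact lastL_mul_stack n h (by simp [hy])

theorem NegE.clean {e : Dl} {n : FreeGroup (XL C)} (hn : NegE e n) (h : HG) :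
    Clean e (n * stk h) := by
  have h1 := hn.cases h
  obtain ⟨y, hy, hye⟩ := hn
  unfold Clean
  rcases h1 with ⟨-, h1⟩ | ⟨y, b, h1⟩
  · simp [h1, hy, hye]
  · simp [h1]

theorem NegE.last_sq {e : Dl} {n : FreeGroup (XL C)} (hn : NegE e n) {h : HG} {q : St C}
    (hq : ∀ q0, lastL n = some (Sum.inr (Sum.inl q0), false) → RR q0 h q) :
    lastL (n * stk h * stL q) = some (Sum.inr (Sum.inl q), true) := by
  apply lastL_mul_of
  rcases hn.cases h with ⟨rfl, h1⟩ | ⟨y, b, h1⟩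
  · rw [h1]
    intro h2
    exact RR.irrefl q (hq q h2)
  · simp [h1]

theorem stk_last_sq (h : HG) (q : St C) :
    lastL (stk h * stL q) = some (Sum.inr (Sum.inl q), true) := by
  apply lastL_mul_of
  have := lastL_mul_stack (1 : FreeGroup (XL C)) h (by simp [lastL_one])
  rw [one_mul] at this
  unfold stk
  rcases this with ⟨-, h1⟩ | ⟨y, b, h1⟩ <;> simp [h1, lastL_one]

theorem Dead.ne_one {e : Dl} {g : FreeGroup (XL C)} (hg : Dead e g) : g ≠ 1 := by
  rcases hg with ⟨n, h, hn, rfl⟩ | ⟨n, h, q, hn, hq, rfl⟩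
  · rcases hn.cases h with ⟨-, h1⟩ | ⟨y, b, h1⟩
    · obtain ⟨y, hy, -⟩ := hn
      exact ne_one_of_lastL (h1.trans hy)
    · exact ne_one_of_lastL h1
  · exact ne_one_of_lastL (hn.last_sq hq)

/-- Playing an inverse state letter after a non-cancelling word. -/
theorem negE_sq {e : Dl} {k : FreeGroup (XL C)} {q : St C}
    (hk : lastL k ≠ some (Sum.inr (Sum.inl q), true)) :
    lastL (k * (stL q)⁻¹) = some (Sum.inr (Sum.inl q), false) ∧ NegE e (k * (stL q)⁻¹) := by
  have := lastL_mul_inv k _ hk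
  exact ⟨this, _, this, by simp⟩

theorem dead_step {e : Dl} {k : FreeGroup (XL C)} {q : St C}
    (hk : lastL k ≠ some (Sum.inr (Sum.inl q), true)) {d : Dl} {η : HG} {w : ℤ} {q' : St C}
    (h : Rule f halt l q d η w q') : Dead e (k * ((stL q)⁻¹ * stk η * stL q')) := by
  obtain ⟨h1, h2⟩ := negE_sq (e := e) hk
  refine Or.inr ⟨k * (stL q)⁻¹, η, q', h2, ?_, by simp [mul_assoc]⟩
  intro q0 hq0
  rw [h1] at hq0
  simp at hq0
  exact hq0 ▸ h.rr

theorem dead_fin {e : Dl} {k : FreeGroup (XL C)} {q : St C}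
    (hk : lastL k ≠ some (Sum.inr (Sum.inl q), true)) : Dead e (k * (stL q)⁻¹) :=
  Or.inl ⟨_, 1, (negE_sq hk).2, by simp⟩

/-- A reply with the wrong Defender letter. -/
theorem dead_wrong {e d0 : Dl} {k : FreeGroup (XL C)}
    (hk : lastL k ≠ some (Sum.inr (Sum.inr d0), false)) {u : FreeGroup (XL C)} {w : ℤ}
    {d : Dl} (hd : d ≠ d0) (hde : d ≠ e) {x : FreeGroup (XL C)} (hx : u = (dl d)⁻¹ * x)
    (h : Mv f halt l u w) (hu : (∃ q, x = stL q) ∨ x = 1 ∨ (∃ q, x = (stL q)⁻¹) ∨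
      ∃ q d η w q', x = (stL q)⁻¹ * stk η * stL q' ∧ Rule f halt l q d η w q') :
    Dead e (k * dl d0 * u) := by
  have h1 : lastL (k * dl d0) = some (Sum.inr (Sum.inr d0), true) := lastL_mul_of _ _ hk
  have h2 : lastL (k * dl d0 * (dl d)⁻¹) = some (Sum.inr (Sum.inr d), false) := by
    apply lastL_mul_inv
    rw [h1]
    simpa using hd.symm
  have h3 : NegE e (k * dl d0 * (dl d)⁻¹) := ⟨_, h2, by simpa using hde⟩
  subst hx
  rw [← mul_assoc]
  rcases hu with ⟨q, rfl⟩ | rfl | ⟨q, rfl⟩ | ⟨q, d, η, w, q', rfl, hr⟩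
  · refine Or.inr ⟨_, 1, q, h3, ?_, by simp⟩
    intro q0 hq0
    rw [h2] at hq0
    simp at hq0
  · exact Or.inl ⟨_, 1, h3, by simp⟩
  · exact dead_fin (by simp [h2])
  · exact dead_step (by simp [h2]) hr

/-- The four kinds of Attacker moves, as a Defender letter to be cancelled and a rest. -/
theorem Mv.shape {u : FreeGroup (XL C)} {w : ℤ} (h : Mv f halt l u w) :
    ∃ d x, u = (dl d)⁻¹ * x ∧
      ((x = 1 ∧ w = 0 ∧ d ≠ .S) ∨ (x = stL .B ∧ w = 0 ∧ d = .S) ∨ (x = (stL .E)⁻¹ ∧ w = 0) ∨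
        ∃ q η q', x = (stL q)⁻¹ * stk η * stL q' ∧ Rule f halt l q d η w q') := by
  cases h with
  | skip d h => exact ⟨d, 1, by simp, Or.inl ⟨rfl, rfl, h⟩⟩
  | start => exact ⟨_, _, rfl, Or.inr (Or.inl ⟨rfl, rfl, rfl⟩)⟩
  | step q d η w q' h =>
    exact ⟨_, _, rfl, Or.inr (Or.inr (Or.inr ⟨_, _, _, rfl, h⟩))⟩
  | fin d => exact ⟨_, _, rfl, Or.inr (Or.inr (Or.inl ⟨rfl, rfl⟩))⟩

theorem dead_wrong' {e d0 : Dl} {k : FreeGroup (XL C)}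
    (hk : lastL k ≠ some (Sum.inr (Sum.inr d0), false)) {w : ℤ}
    {d : Dl} (hd : d ≠ d0) (hde : d ≠ e) {x : FreeGroup (XL C)}
    (h : Mv f halt l ((dl d)⁻¹ * x) w)
    (hu : ((x = 1 ∧ w = 0 ∧ d ≠ .S) ∨ (x = stL .B ∧ w = 0 ∧ d = .S) ∨ (x = (stL .E)⁻¹ ∧ w = 0) ∨
        ∃ q η q', x = (stL q)⁻¹ * stk η * stL q' ∧ Rule f halt l q d η w q')) :
    Dead e (k * dl d0 * ((dl d)⁻¹ * x)) := by
  refine dead_wrong hk hd hde rfl h ?_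
  rcases hu with ⟨h, -⟩ | ⟨h, -⟩ | ⟨h, -⟩ | ⟨q, η, q', h, hr⟩
  · exact Or.inr (Or.inl h)
  · exact Or.inl ⟨_, h⟩
  · exact Or.inr (Or.inr (Or.inl ⟨_, h⟩))
  · exact Or.inr (Or.inr (Or.inr ⟨_, _, _, _, _, h, hr⟩))

theorem Dead.next {e : Dl} (he : e ≠ .S) {g : FreeGroup (XL C)} (hg : Dead e g)
    {u : FreeGroup (XL C)} {w : ℤ} (hu : Mv f halt l u w) : Dead e (g * dl e * u) := by
  obtain ⟨d, x, rfl, hx⟩ := hu.shape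
  rcases hg with ⟨n, h, hn, rfl⟩ | ⟨n, h, q, hn, hq, rfl⟩
  · by_cases hd : d = e
    · subst hd
      rw [mul_assoc _ (dl d), mul_inv_cancel_left]
      rcases hx with ⟨rfl, -⟩ | ⟨-, -, h1⟩ | ⟨rfl, -⟩ | ⟨q, η, q', rfl, hr⟩
      · exact Or.inl ⟨n, h, hn, by simp⟩
      · exact absurd h1 he
      · exact dead_fin ((hn.clean h).2 _)
      · exact dead_step ((hn.clean h).2 _) hr
    · exact dead_wrong' (hn.clean h).1 hd hd hu hx
  · have hl := hn.last_sq hq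
    by_cases hd : d = e
    · subst hd
      rw [mul_assoc _ (dl d), mul_inv_cancel_left]
      rcases hx with ⟨rfl, -⟩ | ⟨-, -, h1⟩ | ⟨rfl, -⟩ | ⟨q2, η, q', rfl, hr⟩
      · exact Or.inr ⟨n, h, q, hn, hq, by simp⟩
      · exact absurd h1 he
      · by_cases hqq : q = .E
        · subst hqq
          exact Or.inl ⟨n, h, hn, by simp⟩
        · exact dead_fin (by simpa [hl] using hqq)
      · by_cases hqq : q = q2
        · subst hqq
          refine Or.inr ⟨n, h * η, q', hn, fun q0 h0 => (hq q0 h0).trans hr.rr, ?_⟩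
          simp [mul_assoc]
        · exact dead_step (by simpa [hl] using hqq) hr
    · exact dead_wrong' (by simp [hl]) hd hd hu hx

variable (f l) in
/-- Honest positions from which Attacker cannot win. -/
def WW (h : HG) (p : ℤ) : St C → Prop
  | .B => True
  | .T x y z => ∀ t : ℕ, alphaE h = t →
      ¬ (x = cellC f l t (p - 1) ∧ y = cellC f l t p ∧ z = cellC f l t (p + 1))
  | .P => alphaE h ≠ 0 ∨ p < 0
  | .N => alphaE h ≠ 0 ∨ 0 < p
  | .E => alphaE h ≠ 0 ∨ p ≠ 0

theorem initC_nat (i : ℕ) : initC l i = l.getI i := by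
  simp [initC]

theorem WW.next (hno : ∀ t p, ¬ halt (cellC f l t p)) {h : HG} {p : ℤ} {q : St C}
    (hW : WW f l h p q) : ∃ d, d ≠ Dl.S ∧
      ∀ η w q', Rule f halt l q d η w q' → WW f l (h * η) (p + w) q' := by
  cases q with
  | B =>
    refine ⟨.L, by simp, fun η w q' hr => ?_⟩
    cases hr with
    | push => trivial
    | guess _ x y z hy =>
      intro t _ h2
      apply hno t (p + 0)
      rw [← h2.2.1]
      exact hy
  | T x y z =>
    have hd : ∃ d, d ≠ Dl.S ∧ ∀ t : ℕ, alphaE h = t → d.sel x y z ≠ cellC f l t (p + d.del) := by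
      by_cases ht : ∃ t : ℕ, alphaE h = t
      · obtain ⟨t, ht⟩ := ht
        have h1 := hW t ht
        have h2 : ∀ t' : ℕ, alphaE h = t' → t' = t := fun t' h' => by
          rw [ht] at h'; exact_mod_cast h'.symm
        by_cases hx : x = cellC f l t (p - 1)
        · by_cases hy : y = cellC f l t p
          · refine ⟨.R, by simp, fun t' h' => ?_⟩
            rw [h2 t' h']
            exact fun hz => h1 ⟨hx, hy, hz⟩
          · refine ⟨.M, by simp, fun t' h' => ?_⟩
            rw [h2 t' h']
            simpa [Dl.sel, Dl.del] using hy
        · refine ⟨.L, by simp, fun t' h' => ?_⟩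
          rw [h2 t' h']
          exact hx
      · exact ⟨.L, by simp, fun t h' => absurd ⟨t, h'⟩ ht⟩
    obtain ⟨d, hdS, hd⟩ := hd
    refine ⟨d, hdS, fun η w q' hr => ?_⟩
    cases hr with
    | back _ _ _ _ x' y' z' hf =>
      rintro t ht ⟨rfl, rfl, rfl⟩
      refine hd (t + 1) ?_ hf.symm
      simp at ht
      push_cast
      linarith
    | inp _ _ _ _ i hi hl =>
      by_contra hc
      simp [WW] at hc
      obtain ⟨hc1, hc2⟩ := hc
      apply hd 0 (by simpa using hc1)
      have : p + d.del = i := by linarith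
      rw [this, hl]
      exact (initC_nat i).symm
    | pos _ _ _ _ hl =>
      by_contra hc
      simp [WW] at hc
      obtain ⟨hc1, hc2⟩ := hc
      apply hd 0 (by simpa using hc1)
      rw [hl]
      have h3 : (l.length : ℤ) ≤ p + d.del := by linarith
      obtain ⟨k, hk⟩ := Int.eq_ofNat_of_zero_le (show 0 ≤ p + d.del by omega)
      rw [hk]
      change _ = initC l k
      rw [initC_nat, List.getI_eq_default]
      omega
    | neg _ _ _ _ hl =>
      by_contra hc
      simp [WW] at hc
      obtain ⟨hc1, hc2⟩ := hc
      apply hd 0 (by simpa using hc1)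
      rw [hl]
      simp only [cellC, initC]
      rw [if_neg (by omega)]
  | P =>
    refine ⟨.L, by simp, fun η w q' hr => ?_⟩
    cases hr with
    | pp =>
      simp only [WW] at *
      rcases hW with hW | hW
      · left; simpa using hW
      · right; omega
    | pe =>
      simp only [WW] at *
      rcases hW with hW | hW
      · left; simpa using hW
      · right; omega
  | N =>
    refine ⟨.L, by simp, fun η w q' hr => ?_⟩
    cases hr with
    | nn =>
      simp only [WW] at *
      rcases hW with hW | hW
      · left; simpa using hW
      · right; omega
    | ne =>
      simp only [WW] at *
      rcases hW with hW | hW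
      · left; simpa using hW
      · right; omega
  | E =>
    refine ⟨.L, by simp, fun η w q' hr => ?_⟩
    cases hr with
    | ee =>
      simp only [WW] at *
      rcases hW with hW | hW
      · left; simpa using hW
      · right; omega

variable (f l) in
/-- Defender's invariant. -/
def InvD (g : FreeGroup (XL C)) (p : ℤ) : Prop :=
  (∃ h q, WW f l h p q ∧ g = stk h * stL q) ∨ (∃ h, (alphaE h ≠ 0 ∨ p ≠ 0) ∧ g = stk h) ∨
    ∃ e, e ≠ Dl.S ∧ Dead e g

theorem InvD.ne {g : FreeGroup (XL C)} {p : ℤ} (h : InvD f l g p) : ¬ (g = 1 ∧ p = 0) := by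
  rintro ⟨rfl, rfl⟩
  rcases h with ⟨h, q, -, h1⟩ | ⟨h, h1, h2⟩ | ⟨e, -, h1⟩
  · exact ne_one_of_lastL (stk_last_sq h q) h1.symm
  · have : h = 1 := by
      have hi : Function.Injective (stk : HG →* FreeGroup (XL C)) :=
        FreeGroup.map_injective Sum.inl_injective
      apply hi
      rw [← h2, map_one]
    subst this
    simp at h1
  · exact h1.ne_one rfl

theorem exists_other (d : Dl) : ∃ e, e ≠ Dl.S ∧ d ≠ e := by
  cases d
  · exact ⟨.M, by simp, by simp⟩
  · exact ⟨.L, by simp, by simp⟩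
  · exact ⟨.M, by simp, by simp⟩
  · exact ⟨.M, by simp, by simp⟩

theorem InvD.next (hno : ∀ t p, ¬ halt (cellC f l t p)) {g : FreeGroup (XL C)} {p : ℤ}
    (hg : InvD f l g p) :
    ∃ d, ∀ u w, Mv f halt l u w → InvD f l (g * dl d * u) (p + w) := by
  rcases hg with ⟨h, q, hW, rfl⟩ | ⟨h, hp, rfl⟩ | ⟨e, he, hD⟩
  · obtain ⟨d0, hd0, hn⟩ := hW.next hno
    have hl := stk_last_sq h q
    refine ⟨d0, fun u w hu => ?_⟩
    obtain ⟨d, x, rfl, hx⟩ := hu.shape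
    by_cases hd : d = d0
    · subst hd
      rw [mul_assoc _ (dl d), mul_inv_cancel_left]
      rcases hx with ⟨rfl, rfl, -⟩ | ⟨-, -, h1⟩ | ⟨rfl, rfl⟩ | ⟨q2, η, q', rfl, hr⟩
      · exact Or.inl ⟨h, q, by simpa using hW, by simp⟩
      · exact absurd h1 hd0
      · by_cases hqq : q = .E
        · subst hqq
          exact Or.inr (Or.inl ⟨h, by simpa [WW] using hW, by simp⟩)
        · exact Or.inr (Or.inr ⟨.L, by simp, dead_fin (by simpa [hl] using hqq)⟩)
      · by_cases hqq : q = q2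
        · subst hqq
          exact Or.inl ⟨h * η, q', hn _ _ _ hr, by simp [mul_assoc]⟩
        · exact Or.inr (Or.inr ⟨.L, by simp, dead_step (by simpa [hl] using hqq) hr⟩)
    · obtain ⟨e, he, hde⟩ := exists_other d
      exact Or.inr (Or.inr ⟨e, he, dead_wrong' (by simp [hl]) hd hde hu hx⟩)
  · refine ⟨.L, fun u w hu => ?_⟩
    obtain ⟨d, x, rfl, hx⟩ := hu.shape
    have hc := clean_stk (C := C) .L h
    by_cases hd : d = .L
    · subst hd
      rw [mul_assoc _ (dl _), mul_inv_cancel_left]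
      rcases hx with ⟨rfl, rfl, -⟩ | ⟨-, -, h1⟩ | ⟨rfl, rfl⟩ | ⟨q2, η, q', rfl, hr⟩
      · exact Or.inr (Or.inl ⟨h, by simpa using hp, by simp⟩)
      · simp at h1
      · exact Or.inr (Or.inr ⟨.L, by simp, dead_fin (hc.2 _)⟩)
      · exact Or.inr (Or.inr ⟨.L, by simp, dead_step (hc.2 _) hr⟩)
    · obtain ⟨e, he, hde⟩ := exists_other d
      exact Or.inr (Or.inr ⟨e, he, dead_wrong' hc.1 hd hde hu hx⟩)
  · exact ⟨e, fun u w hu => Or.inr (Or.inr ⟨e, he, hD.next he hu⟩)⟩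

theorem InvD.start {u : FreeGroup (XL C)} {w : ℤ} (hu : Mv f halt l u w) :
    InvD f l (1 * dl .S * u) (0 + w) := by
  obtain ⟨d, x, rfl, hx⟩ := hu.shape
  by_cases hd : d = .S
  · subst hd
    rw [mul_assoc _ (dl _), mul_inv_cancel_left]
    rcases hx with ⟨-, -, h1⟩ | ⟨rfl, rfl, -⟩ | ⟨rfl, rfl⟩ | ⟨q2, η, q', rfl, hr⟩
    · exact absurd rfl h1
    · exact Or.inl ⟨1, .B, trivial, by simp⟩
    · exact Or.inr (Or.inr ⟨.L, by simp, dead_fin (by simp [lastL_one])⟩)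
    · exact Or.inr (Or.inr ⟨.L, by simp, dead_step (by simp [lastL_one]) hr⟩)
  · obtain ⟨e, he, hde⟩ := exists_other d
    exact Or.inr (Or.inr ⟨e, he, dead_wrong' (by simp [lastL_one]) hd hde hu hx⟩)

end CAGame

/-! ### Part 5: Attacker's strategy -/

section AttackerSide

variable {C : Type} [Inhabited C] {f : C → C → C → C} {halt : C → Prop} {l : List C}

/-- The image of an abstract position. -/
def PhiP {X : Type} (φ : FreeGroup X →* F2) (g : FreeGroup X) (p : ℤ) : F2 × F1 :=
  (φ g, FreeGroup.of () ^ p)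

theorem PhiP_mul {X : Type} (φ : FreeGroup X →* F2) (g h : FreeGroup X) (p w : ℤ) :
    PhiP φ g p * PhiP φ h w = PhiP φ (g * h) (p + w) := by
  simp [PhiP, zpow_add]

theorem PhiP_one {X : Type} (φ : FreeGroup X →* F2) : PhiP φ 1 0 = 1 := by
  simp [PhiP]

theorem PhiP_eq_one {X : Type} {φ : FreeGroup X →* F2} (hφ : Function.Injective φ)
    {g : FreeGroup X} {p : ℤ} (h : PhiP φ g p = 1) : g = 1 ∧ p = 0 := by
  have h1 := congrArg Prod.fst h
  have h2 := congrArg Prod.snd h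
  refine ⟨hφ ?_, rho_zpow_eq_one h2⟩
  rw [map_one]
  exact h1

/-- The lists of the concrete game represent the abstract game. -/
structure GameRep (f : C → C → C → C) (halt : C → Prop) (l : List C)
    (φ : FreeGroup (XL C) →* F2) (A D : List (F2 × F1)) : Prop where
  hA : ∀ u, u ∈ A ↔ ∃ g w, Mv f halt l g w ∧ u = PhiP φ g w
  hD : ∀ v, v ∈ D ↔ ∃ d, v = PhiP φ (dl d) 0

variable {φ : FreeGroup (XL C) →* F2} {A D : List (F2 × F1)}

theorem GameRep.intro (H : GameRep f halt l φ A D) {g : FreeGroup (XL C)} {p : ℤ}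
    (h : ∀ d, ∃ u w, Mv f halt l u w ∧ ((g * dl d * u = 1 ∧ p + w = 0) ∨
      AW A D (PhiP φ (g * dl d * u) (p + w)))) : AW A D (PhiP φ g p) := by
  apply AW.intro
  intro v hv
  obtain ⟨d, rfl⟩ := (H.hD v).1 hv
  obtain ⟨u, w, hu, h1⟩ := h d
  refine ⟨PhiP φ u w, (H.hA _).2 ⟨u, w, hu, rfl⟩, ?_⟩
  rw [PhiP_mul, PhiP_mul, add_zero]
  rcases h1 with ⟨h1, h2⟩ | h1
  · left; rw [h1, h2, PhiP_one]
  · exact Or.inr h1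

theorem GameRep.step (H : GameRep f halt l φ A D) {h : HG} {q : St C} {p : ℤ}
    (hs : ∀ d, ∃ η w q', Rule f halt l q d η w q' ∧
      AW A D (PhiP φ (stk (h * η) * stL q') (p + w))) :
    AW A D (PhiP φ (stk h * stL q) p) := by
  apply H.intro
  intro d
  obtain ⟨η, w, q', h1, h2⟩ := hs d
  refine ⟨_, w, Mv.step q d η w q' h1, Or.inr ?_⟩
  have : stk h * stL q * dl d * ((dl d)⁻¹ * ((stL q)⁻¹ * stk η * stL q')) =
      stk (h * η) * stL q' := by
    rw [map_mul]; group
  rwa [this]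

theorem GameRep.winE (H : GameRep f halt l φ A D) (n : ℕ) :
    AW A D (PhiP φ (stk (bL ^ n) * stL .E) 0) := by
  induction n with
  | zero =>
    apply H.intro
    intro d
    refine ⟨_, 0, Mv.fin d, Or.inl ⟨?_, by simp⟩⟩
    simp [mul_assoc]
  | succ n ih =>
    apply H.step
    intro d
    refine ⟨_, _, _, Rule.ee d, ?_⟩
    simpa [pow_succ] using ih

theorem GameRep.winP (H : GameRep f halt l φ A D) (n : ℕ) (k : ℕ) :
    AW A D (PhiP φ (stk (bL ^ k) * stL .P) n) := by
  induction n generalizing k with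
  | zero =>
    apply H.step
    intro d
    refine ⟨_, _, _, Rule.pe d, ?_⟩
    simpa using H.winE k
  | succ n ih =>
    apply H.step
    intro d
    refine ⟨_, _, _, Rule.pp d, ?_⟩
    have := ih (k + 1)
    rw [pow_succ] at this
    convert this using 2
    push_cast; ring

theorem GameRep.winN (H : GameRep f halt l φ A D) (n : ℕ) (k : ℕ) :
    AW A D (PhiP φ (stk (bL ^ k) * stL .N) (-(n : ℤ))) := by
  induction n generalizing k with
  | zero =>
    apply H.step
    intro d
    refine ⟨_, _, _, Rule.ne d, ?_⟩
    simpa using H.winE k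
  | succ n ih =>
    apply H.step
    intro d
    refine ⟨_, _, _, Rule.nn d, ?_⟩
    have := ih (k + 1)
    rw [pow_succ] at this
    convert this using 2
    push_cast; ring

theorem sel_cell (t : ℕ) (p : ℤ) (d : Dl) :
    d.sel (cellC f l t (p - 1)) (cellC f l t p) (cellC f l t (p + 1)) =
      cellC f l t (p + d.del) := by
  cases d <;> simp [Dl.sel, Dl.del, sub_eq_add_neg]

theorem GameRep.winT (H : GameRep f halt l φ A D) (t : ℕ) (p : ℤ) :
    AW A D (PhiP φ (stk (aL ^ t) *
      stL (.T (cellC f l t (p - 1)) (cellC f l t p) (cellC f l t (p + 1)))) p) := by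
  induction t generalizing p with
  | zero =>
    apply H.step
    intro d
    have hs := sel_cell (f := f) (l := l) 0 p d
    have hs' : cellC f l 0 (p + d.del) = initC l (p + d.del) := rfl
    rw [hs'] at hs
    by_cases h0 : 0 ≤ p + d.del
    · obtain ⟨i, hi⟩ := Int.eq_ofNat_of_zero_le h0
      rw [hi, initC_nat] at hs
      by_cases hl : i < l.length
      · refine ⟨_, _, _, Rule.inp d _ _ _ i hl hs, ?_⟩
        have := H.winE 0
        have e : p + (d.del - i) = 0 := by omega
        simpa [e] using this
      · rw [List.getI_eq_default _ (by omega)] at hs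
        refine ⟨_, _, _, Rule.pos d _ _ _ hs, ?_⟩
        have := H.winP (i - l.length) 0
        have e : p + (d.del - l.length) = ((i - l.length : ℕ) : ℤ) := by omega
        rw [e]
        simpa using this
    · have : initC l (p + d.del) = default := by simp [initC, h0]
      rw [this] at hs
      refine ⟨_, _, _, Rule.neg d _ _ _ hs, ?_⟩
      obtain ⟨i, hi⟩ := Int.eq_ofNat_of_zero_le (show 0 ≤ -(p + d.del + 1) by omega)
      have := H.winN i 0
      have e : p + (d.del + 1) = -(i : ℤ) := by omega
      rw [e]
      simpa using this
  | succ t ih =>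
    apply H.step
    intro d
    have hs := sel_cell (f := f) (l := l) (t + 1) p d
    refine ⟨_, _, _, Rule.back d _ _ _ _ _ _ hs.symm, ?_⟩
    have := ih (p + d.del)
    rw [pow_succ, mul_inv_cancel_right]
    exact this

theorem GameRep.winB (H : GameRep f halt l φ A D) (k t : ℕ) (p q : ℤ)
    (hh : halt (cellC f l (t + k) q)) (hq : |q - p| ≤ k) :
    AW A D (PhiP φ (stk (aL ^ t) * stL .B) p) := by
  induction k generalizing t p with
  | zero =>
    have : q = p := by
      have := abs_nonpos_iff.1 (by simpa using hq : |q - p| ≤ 0)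
      omega
    subst this
    apply H.step
    intro d
    refine ⟨_, _, _, Rule.guess d (cellC f l t (q - 1)) (cellC f l t q) (cellC f l t (q + 1))
      (by simpa using hh), ?_⟩
    simpa using H.winT t q
  | succ k ih =>
    have : ∃ e : Dl, |q - (p + e.del)| ≤ k := by
      push_cast at hq
      rw [abs_le] at hq
      rcases lt_trichotomy q p with h | h | h
      · exact ⟨.L, by rw [abs_le]; simp only [Dl.del]; omega⟩
      · exact ⟨.M, by rw [abs_le]; simp only [Dl.del]; omega⟩
      · exact ⟨.R, by rw [abs_le]; simp only [Dl.del]; omega⟩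
    obtain ⟨e, he⟩ := this
    apply H.step
    intro d
    refine ⟨_, _, _, Rule.push d e, ?_⟩
    rw [← pow_succ]
    refine ih (t + 1) _ ?_ he
    convert hh using 2
    omega

theorem GameRep.wins (H : GameRep f halt l φ A D) {t : ℕ} {p : ℤ} (hp : |p| ≤ t)
    (hh : halt (cellC f l t p)) : WGAttackerWins A D 1 := by
  apply AW.wins
  · intro hA
    have := (H.hA _).2 ⟨_, _, Mv.start, rfl⟩
    simp [hA] at this
  · rw [← PhiP_one φ]
    apply H.intro
    intro d
    by_cases hd : d = .S
    · subst hd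
      refine ⟨_, _, Mv.start, Or.inr ?_⟩
      have := H.winB t 0 0 p (by simpa using hh) (by simpa using hp)
      simpa using this
    · exact ⟨_, _, Mv.skip d hd, Or.inl (by simp)⟩

theorem GameRep.not_wins (H : GameRep f halt l φ A D) (hφ : Function.Injective φ)
    (hno : ∀ t p, ¬ halt (cellC f l t p)) : ¬ WGAttackerWins A D 1 := by
  apply not_wins_of_inv (fun g => g = 1 ∨ ∃ u p, InvD f l u p ∧ g = PhiP φ u p)
  · exact Or.inl rfl
  · rintro g (rfl | ⟨u, p, hu, rfl⟩)
    · refine ⟨_, (H.hD _).2 ⟨.S, rfl⟩, fun v hv => ?_⟩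
      obtain ⟨x, w, hx, rfl⟩ := (H.hA v).1 hv
      rw [← PhiP_one φ, PhiP_mul, PhiP_mul, add_zero]
      have := InvD.start hx
      exact ⟨fun h => this.ne (PhiP_eq_one hφ (h.trans (PhiP_one φ))), Or.inr ⟨_, _, this, rfl⟩⟩
    · obtain ⟨d, hd⟩ := hu.next hno
      refine ⟨_, (H.hD _).2 ⟨d, rfl⟩, fun v hv => ?_⟩
      obtain ⟨x, w, hx, rfl⟩ := (H.hA v).1 hv
      rw [PhiP_mul, PhiP_mul, add_zero]
      have := hd _ _ hx
      exact ⟨fun h => this.ne (PhiP_eq_one hφ h), Or.inr ⟨_, _, this, rfl⟩⟩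

end AttackerSide

/-! ### Part 6: the instance associated with an initial configuration -/

section InstanceOf

instance {C : Type} [Finite C] : Finite (St C) := by
  let F : St C → Option (C × C × C) ⊕ Fin 3
    | .B => Sum.inr 0
    | .T x y z => Sum.inl (some (x, y, z))
    | .P => Sum.inr 1
    | .N => Sum.inr 2
    | .E => Sum.inl none
  apply Finite.of_injective F
  intro a b h
  cases a <;> cases b <;> simp_all [F]

variable {C : Type} [Inhabited C] (f : C → C → C → C) (halt : C → Prop)

/-- Moves available for every initial configuration. -/
def fixSet : Set (FreeGroup (XL C) × ℤ) := {x | ∀ l, Mv f halt l x.1 x.2}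

/-- Moves verifying a cell with content `c`. -/
def verSet (q : St C) (c : C) : Set (FreeGroup (XL C) × ℤ) :=
  {x | ∃ d : Dl, ∃ a b e : C, d.sel a b e = c ∧
    x = ((dl d)⁻¹ * ((stL (.T a b e))⁻¹ * stk 1 * stL q), d.del)}

theorem verSet_finite [Finite C] (q : St C) (c : C) : (verSet q c).Finite := by
  refine (Set.finite_range (fun y : Dl × C × C × C =>
    (((dl y.1)⁻¹ * ((stL (.T y.2.1 y.2.2.1 y.2.2.2))⁻¹ * stk 1 * stL q), y.1.del) :
      FreeGroup (XL C) × ℤ))).subset ?_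
  rintro x ⟨d, a, b, e, -, rfl⟩
  exact ⟨(d, a, b, e), rfl⟩

theorem fixSet_finite [Finite C] : (fixSet f halt).Finite := by
  have h1 : (Set.range (fun y : Dl => (((dl y)⁻¹, 0) : FreeGroup (XL C) × ℤ))).Finite :=
    Set.finite_range _
  have h2 : (Set.range (fun y : Dl =>
      (((dl y)⁻¹ * (stL .E)⁻¹, 0) : FreeGroup (XL C) × ℤ))).Finite := Set.finite_range _
  have h3 : ((fun y : St C × Dl × HG × ℤ × St C =>
      (((dl y.2.1)⁻¹ * ((stL y.1)⁻¹ * stk y.2.2.1 * stL y.2.2.2.2), y.2.2.2.1) :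
        FreeGroup (XL C) × ℤ)) '' (Set.univ ×ˢ (Set.univ ×ˢ
          (({1, aL, aL⁻¹, bL, bL⁻¹} : Set HG) ×ˢ (Set.Icc (-2) 2 ×ˢ Set.univ))))).Finite := by
    apply Set.Finite.image
    refine Set.finite_univ.prod (Set.finite_univ.prod (Set.Finite.prod ?_
      ((Set.finite_Icc _ _).prod Set.finite_univ)))
    simp
  refine (((h1.union h2).union h3).union
    (Set.finite_singleton ((dl .S)⁻¹ * stL .B, 0))).subset ?_
  rintro ⟨g, w⟩ hx
  have hx : Mv f halt [] g w := hx []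
  cases hx with
  | skip d h => exact Or.inl (Or.inl (Or.inl ⟨d, rfl⟩))
  | start => exact Or.inr rfl
  | fin d => exact Or.inl (Or.inl (Or.inr ⟨d, rfl⟩))
  | step q d η w q' h =>
    refine Or.inl (Or.inr ⟨(q, d, η, w, q'), ?_, rfl⟩)
    simp only [Set.mem_prod, Set.mem_univ, true_and, and_true, Set.mem_insert_iff,
      Set.mem_singleton_iff, Set.mem_Icc]
    cases h with
    | push d e => cases e <;> simp [Dl.del]
    | inp d x y z i hi h => simp at hi
    | back => cases d <;> simp [Dl.del]
    | pos => cases d <;> simp [Dl.del]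
    | neg => cases d <;> simp [Dl.del]
    | _ => simp

theorem mv_iff (l : List C) (g : FreeGroup (XL C)) (w : ℤ) : Mv f halt l g w ↔
    (g, w) ∈ fixSet f halt ∨ (∃ i < l.length, (g, w + i) ∈ verSet .E (l.getI i)) ∨
      (g, w + l.length) ∈ verSet .P default := by
  constructor
  · intro h
    cases h with
    | skip d h => exact Or.inl fun l => .skip d h
    | start => exact Or.inl fun l => .start
    | fin d => exact Or.inl fun l => .fin d
    | step q d η w q' h =>
      cases h with
      | push d e => exact Or.inl fun l => .step _ _ _ _ _ (.push d e)
      | guess d x y z h => exact Or.inl fun l => .step _ _ _ _ _ (.guess d x y z h)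
      | back d x y z x' y' z' h =>
        exact Or.inl fun l => .step _ _ _ _ _ (.back d x y z x' y' z' h)
      | neg d x y z h => exact Or.inl fun l => .step _ _ _ _ _ (.neg d x y z h)
      | pp d => exact Or.inl fun l => .step _ _ _ _ _ (.pp d)
      | pe d => exact Or.inl fun l => .step _ _ _ _ _ (.pe d)
      | nn d => exact Or.inl fun l => .step _ _ _ _ _ (.nn d)
      | ne d => exact Or.inl fun l => .step _ _ _ _ _ (.ne d)
      | ee d => exact Or.inl fun l => .step _ _ _ _ _ (.ee d)
      | inp d x y z i hi h =>
        exact Or.inr (Or.inl ⟨i, hi, d, x, y, z, h, by simp⟩)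
      | pos d x y z h =>
        exact Or.inr (Or.inr ⟨d, x, y, z, h, by simp⟩)
  · rintro (h | ⟨i, hi, d, x, y, z, h1, h2⟩ | ⟨d, x, y, z, h1, h2⟩)
    · exact h l
    · obtain ⟨rfl, h3⟩ := Prod.mk.inj h2
      have : w = d.del - i := by omega
      subst this
      exact .step _ _ _ _ _ (.inp d x y z i hi h1)
    · obtain ⟨rfl, h3⟩ := Prod.mk.inj h2
      have : w = d.del - l.length := by omega
      subst this
      exact .step _ _ _ _ _ (.pos d x y z h1)

variable (φ : FreeGroup (XL C) →* F2)

/-- The words of an abstract move. -/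
def encM (x : FreeGroup (XL C) × ℤ) : BWord × UWord :=
  ((φ x.1).toWord, ((FreeGroup.of () : F1) ^ x.2).toWord)

/-- The shift of the counter of a move. -/
def shiftM (i : ℕ) (x : BWord × UWord) : BWord × UWord :=
  (x.1, x.2 ++ (List.range i).map fun _ => ((), false))

/-- Reading back a pair of words. -/
def decM (p : BWord × UWord) : F2 × F1 := (FreeGroup.mk p.1, FreeGroup.mk p.2)

theorem decM_shift (i : ℕ) (x : FreeGroup (XL C) × ℤ) :
    decM (shiftM i (encM φ x)) = PhiP φ x.1 (x.2 - i) := by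
  have h : (List.range i).map (fun _ => (((), false) : Unit × Bool)) =
      List.replicate i ((), false) := by simp
  simp only [decM, shiftM, encM, PhiP, h]
  rw [← FreeGroup.mul_mk, FreeGroup.mk_toWord, FreeGroup.mk_toWord, rho_replicate,
    sub_eq_add_neg, zpow_add]

theorem decM_enc (x : FreeGroup (XL C) × ℤ) :
    decM (encM φ x) = PhiP φ x.1 x.2 := by
  simp only [decM, encM, PhiP]
  rw [FreeGroup.mk_toWord, FreeGroup.mk_toWord]

variable [Finite C]

/-- The fixed part of Attacker's list. -/
noncomputable def fixList : List (BWord × UWord) :=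
  (fixSet_finite f halt).toFinset.toList.map (encM φ)

/-- The part of Attacker's list verifying one cell, before shifting. -/
noncomputable def verList (q : St C) (c : C) : List (BWord × UWord) :=
  (verSet_finite q c).toFinset.toList.map (encM φ)

/-- The instance associated with an initial configuration. -/
noncomputable def instOf (l : List C) : WGInstance :=
  (fixList f halt φ ++ ((List.range l.length).flatMap fun i =>
      (verList φ .E (l.getI i)).map (shiftM i)) ++
    (verList φ .P default).map (shiftM l.length),
   [Dl.L, Dl.M, Dl.R, Dl.S].map fun d => (φ (dl d)).toWord)

theorem instOf_rep (l : List C) :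
    GameRep f halt l φ ((instOf f halt φ l).1.map fun p => (FreeGroup.mk p.1, FreeGroup.mk p.2))
      ((instOf f halt φ l).2.map fun v => ((FreeGroup.mk v : F2), (1 : F1))) := by
  constructor
  · intro u
    have e : ∀ L : List (BWord × UWord), L.map (fun p => ((FreeGroup.mk p.1 : F2),
      (FreeGroup.mk p.2 : F1))) = L.map decM := fun _ => rfl
    rw [e]
    simp only [instOf, List.map_append, List.mem_append, List.mem_map, List.mem_flatMap,
      List.mem_range, fixList, verList, Finset.mem_toList, Set.Finite.mem_toFinset]
    constructor
    · rintro ((⟨_, ⟨x, hx, rfl⟩, rfl⟩ | ⟨_, ⟨i, hi, _, ⟨x, hx, rfl⟩, rfl⟩, rfl⟩) |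
        ⟨_, ⟨_, ⟨x, hx, rfl⟩, rfl⟩, rfl⟩)
      · exact ⟨x.1, x.2, hx l, decM_enc φ x⟩
      · exact ⟨x.1, x.2 - i, (mv_iff f halt l _ _).2 (Or.inr (Or.inl ⟨i, hi, by simpa using hx⟩)),
          decM_shift φ i x⟩
      · exact ⟨x.1, x.2 - l.length, (mv_iff f halt l _ _).2 (Or.inr (Or.inr (by simpa using hx))),
          decM_shift φ _ x⟩
    · rintro ⟨g, w, h, rfl⟩
      rcases (mv_iff f halt l g w).1 h with h | ⟨i, hi, h⟩ | h
      · exact Or.inl (Or.inl ⟨_, ⟨_, h, rfl⟩, decM_enc φ _⟩)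
      · refine Or.inl (Or.inr ⟨_, ⟨i, hi, _, ⟨_, h, rfl⟩, rfl⟩, ?_⟩)
        rw [decM_shift]; simp
      · refine Or.inr ⟨_, ⟨_, ⟨_, h, rfl⟩, rfl⟩, ?_⟩
        rw [decM_shift]; simp
  · intro v
    have e : ∀ d : Dl, ((FreeGroup.mk (φ (dl d)).toWord : F2), (1 : F1)) = PhiP φ (dl d) 0 := by
      intro d
      rw [FreeGroup.mk_toWord]
      simp [PhiP]
    simp only [instOf, List.map_map, List.mem_map, Function.comp, e]
    constructor
    · rintro ⟨d, -, rfl⟩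
      exact ⟨d, rfl⟩
    · rintro ⟨d, rfl⟩
      exact ⟨d, by cases d <;> simp, rfl⟩

theorem shiftM_primrec : Primrec₂ shiftM := by
  unfold shiftM
  change Primrec (fun y : ℕ × (BWord × UWord) =>
    (y.2.1, y.2.2 ++ (List.range y.1).map fun _ => (((), false) : Unit × Bool)))
  refine Primrec.pair (Primrec.fst.comp Primrec.snd) ?_
  refine Primrec.list_append.comp (Primrec.snd.comp Primrec.snd) ?_
  refine Primrec.list_map (Primrec.list_range.comp Primrec.fst) ?_
  exact (Primrec.const _).to₂

theorem instOf_primrec [Primcodable C] : Primrec (instOf f halt φ) := by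
  unfold instOf
  refine Primrec.pair ?_ (Primrec.const _)
  refine Primrec.list_append.comp (Primrec.list_append.comp (Primrec.const _) ?_) ?_
  · refine Primrec.list_flatMap (Primrec.list_range.comp Primrec.list_length) ?_
    change Primrec (fun y : List C × ℕ => (verList φ .E (y.1.getI y.2)).map (shiftM y.2))
    refine Primrec.list_map ?_ ?_
    · exact (Primrec.dom_finite (verList φ (.E : St C))).comp
        (Primrec.list_getI.comp Primrec.fst Primrec.snd)
    · exact (shiftM_primrec.comp (Primrec.snd.comp Primrec.fst) Primrec.snd).to₂
  · refine Primrec.list_map (Primrec.const _) ?_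
    exact (shiftM_primrec.comp (Primrec.list_length.comp Primrec.fst) Primrec.snd).to₂

end InstanceOf

/-- The reduction from cellular automata to the word game. -/
theorem ca_reduction {C : Type} [Inhabited C] [Finite C] [Primcodable C] (f : C → C → C → C)
    (halt : C → Prop) : ∃ J : List C → WGInstance, Primrec J ∧ ∀ l,
      ((∃ t : ℕ, ∃ p : ℤ, |p| ≤ t ∧ halt (cellC f l t p)) →
        WGAttackerWins ((J l).1.map fun p => (FreeGroup.mk p.1, FreeGroup.mk p.2))
        ((J l).2.map fun v => ((FreeGroup.mk v : F2), (1 : F1))) (1 : F2 × F1)) ∧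
      (WGAttackerWins ((J l).1.map fun p => (FreeGroup.mk p.1, FreeGroup.mk p.2))
        ((J l).2.map fun v => ((FreeGroup.mk v : F2), (1 : F1))) (1 : F2 × F1) →
        ∃ t : ℕ, ∃ p : ℤ, halt (cellC f l t p)) := by
  obtain ⟨φ, hφ⟩ := exists_emb (XL C)
  refine ⟨instOf f halt φ, instOf_primrec f halt φ, fun l => ⟨?_, ?_⟩⟩
  · rintro ⟨t, p, hp, h⟩
    exact (instOf_rep f halt φ l).wins hp h
  · intro h
    by_contra! hno
    exact (instOf_rep f halt φ l).not_wins hφ hno h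

/-! ### Part 7: Turing machines as cellular automata -/

section TuringCA

open Turing

variable {G : Type} [Inhabited G] {Q : Type} [Inhabited Q] (M : TM0.Machine G Q)

/-- The state leaving a cell, with its direction. -/
def outD (c : G × Option Q) : Option (Option Dir × Q) :=
  match c.2 with
  | none => none
  | some q =>
    match M q c.1 with
    | none => some (none, q)
    | some (q', TM0.Stmt.write _) => some (none, q')
    | some (q', TM0.Stmt.move d) => some (some d, q')

/-- The new symbol of a cell. -/
def newSym (c : G × Option Q) : G :=
  match c.2 with
  | none => c.1
  | some q =>
    match M q c.1 with
    | some (_, TM0.Stmt.write a) => a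
    | _ => c.1

/-- The new state of a cell. -/
def newSt (x y z : G × Option Q) : Option Q :=
  match outD M x with
  | some (some Dir.right, q) => some q
  | _ =>
    match outD M z with
    | some (some Dir.left, q) => some q
    | _ =>
      match outD M y with
      | some (none, q) => some q
      | _ => none

/-- The local rule. -/
def tmRule (x y z : G × Option Q) : G × Option Q := (newSym M y, newSt M x y z)

/-- Halting cells. -/
def tmHalt (c : G × Option Q) : Prop := ∃ q, c.2 = some q ∧ M q c.1 = none

/-- The cell contents of a machine configuration with the head at position `h`. -/
def encCell (c : TM0.Cfg G Q) (h p : ℤ) : G × Option Q :=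
  (c.Tape.nth (p - h), if p = h then some c.q else none)

theorem encCell_step {c c' : TM0.Cfg G Q} (h : ℤ) (hc : TM0.step M c = some c') :
    ∃ h', |h' - h| ≤ 1 ∧ ∀ p,
      tmRule M (encCell c h (p - 1)) (encCell c h p) (encCell c h (p + 1)) = encCell c' h' p := by
  obtain ⟨q, T⟩ := c
  simp only [TM0.step] at hc
  have hT : T.nth 0 = T.head := T.nth_zero
  cases hM : M q T.head with
  | none => simp [hM] at hc
  | some r =>
    obtain ⟨q', s⟩ := r
    rw [hM] at hc
    simp only [Option.map_some, Option.some.injEq] at hc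
    have out0 : ∀ p, p ≠ h → outD M (encCell ⟨q, T⟩ h p) = none := by
      intro p hp
      simp [outD, encCell, hp]
    have sym0 : ∀ p, p ≠ h → newSym M (encCell ⟨q, T⟩ h p) = T.nth (p - h) := by
      intro p hp
      simp [newSym, encCell, hp]
    cases s with
    | write a =>
      simp only at hc
      subst hc
      refine ⟨h, by simp, fun p => ?_⟩
      have out1 : outD M (encCell ⟨q, T⟩ h h) = some (none, q') := by
        simp [outD, encCell, hT, hM]
      have sym1 : newSym M (encCell ⟨q, T⟩ h h) = a := by
        simp [newSym, encCell, hT, hM]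
      by_cases hp : p = h
      · subst hp
        unfold tmRule newSt
        rw [sym1, out1, out0 _ (by omega), out0 _ (by omega)]
        unfold encCell
        rw [Tape.write_nth]
        simp
      · have hp' : p - h ≠ 0 := by omega
        unfold tmRule newSt
        rw [sym0 p hp, out0 p hp]
        by_cases h1 : p - 1 = h
        · rw [h1, out1, out0 (p + 1) (by omega)]
          simp [encCell, Tape.write_nth, hp, hp']
        · rw [out0 _ h1]
          by_cases h2 : p + 1 = h
          · rw [h2, out1]
            simp [encCell, Tape.write_nth, hp, hp']
          · rw [out0 _ h2]
            simp [encCell, Tape.write_nth, hp, hp']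
    | move d =>
      simp only at hc
      subst hc
      have out1 : outD M (encCell ⟨q, T⟩ h h) = some (some d, q') := by
        simp [outD, encCell, hT, hM]
      have sym1 : ∀ p, newSym M (encCell ⟨q, T⟩ h p) = T.nth (p - h) := by
        intro p
        by_cases hp : p = h
        · subst hp
          simp [newSym, encCell, hT, hM]
        · exact sym0 p hp
      cases d with
      | left =>
        refine ⟨h - 1, by simp, fun p => ?_⟩
        have e : (T.move Dir.left).nth (p - (h - 1)) = T.nth (p - h) := by
          rw [Tape.move_left_nth]; congr 1; ring
        unfold tmRule newSt
        rw [sym1]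
        by_cases h2 : p + 1 = h
        · rw [h2, out1, out0 (p - 1) (by omega)]
          simp only [encCell, e, if_pos (show p = h - 1 by omega)]
        · have hp : p ≠ h - 1 := by omega
          rw [out0 _ h2]
          by_cases h1 : p - 1 = h
          · rw [h1, out1, out0 p (by omega)]
            simp [encCell, e, hp]
          · rw [out0 _ h1]
            by_cases h3 : p = h
            · have o3 : outD M (encCell ⟨q, T⟩ h p) = outD M (encCell ⟨q, T⟩ h h) := by rw [h3]
              rw [o3, out1]
              simp only [encCell, e, if_neg hp]
            · rw [out0 _ h3]
              simp [encCell, e, hp]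
      | right =>
        refine ⟨h + 1, by simp, fun p => ?_⟩
        have e : (T.move Dir.right).nth (p - (h + 1)) = T.nth (p - h) := by
          rw [Tape.move_right_nth]; congr 1; ring
        unfold tmRule newSt
        rw [sym1]
        by_cases h2 : p - 1 = h
        · rw [h2, out1]
          simp only [encCell, e, if_pos (show p = h + 1 by omega)]
        · have hp : p ≠ h + 1 := by omega
          rw [out0 _ h2]
          by_cases h1 : p + 1 = h
          · rw [h1, out1, out0 p (by omega)]
            simp [encCell, e, hp]
          · rw [out0 _ h1]
            by_cases h3 : p = h
            · have o3 : outD M (encCell ⟨q, T⟩ h p) = outD M (encCell ⟨q, T⟩ h h) := by rw [h3]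
              rw [o3, out1]
              simp only [encCell, e, if_neg hp]
            · rw [out0 _ h3]
              simp [encCell, e, hp]

/-- The initial cells. -/
def tmInit (l : List G) : List (G × Option Q) :=
  (l.headI, some default) :: l.tail.map fun x => (x, none)

theorem tmInit_spec (l : List G) (p : ℤ) :
    initC (tmInit (Q := Q) l) p = encCell (TM0.init l) 0 p := by
  simp only [encCell, TM0.init, sub_zero]
  rcases p with n | n
  · have e : (Int.ofNat n) = (n : ℤ) := rfl
    rw [e, initC_nat]
    have e2 : (Tape.mk₁ l).nth (n : ℤ) = l.getI n := by
      rw [Tape.mk₁, Tape.mk₂, Tape.mk'_nth_nat, ListBlank.nth_mk]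
    rw [e2]
    cases n with
    | zero => cases l <;> simp [tmInit, List.getI]
    | succ n =>
      have : ((n + 1 : ℕ) : ℤ) ≠ 0 := by omega
      rw [if_neg this]
      rw [tmInit, List.getI_cons_succ]
      rcases l with _ | ⟨a, l⟩
      · rfl
      · rw [List.getI_cons_succ, List.tail_cons]
        by_cases hn : n < l.length
        · rw [List.getI_eq_getElem _ (by simpa using hn), List.getI_eq_getElem _ hn]
          simp
        · rw [List.getI_eq_default _ (by simpa using hn), List.getI_eq_default _ (by omega)]
          rfl
  · have h0 : Int.negSucc n ≠ 0 := by omega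
    have h1 : ¬ (0 ≤ Int.negSucc n) := by omega
    rw [if_neg h0, initC, if_neg h1]
    have : (Tape.mk₁ l).nth (Int.negSucc n) = (ListBlank.mk ([] : List G)).nth n := rfl
    rw [this, ListBlank.nth_mk]
    cases n <;> rfl

theorem tm_reach (l : List G) {c : TM0.Cfg G Q}
    (hc : StateTransition.Reaches (TM0.step M) (TM0.init l) c) :
    ∃ (t : ℕ) (h : ℤ), |h| ≤ t ∧ ∀ p, cellC (tmRule M) (tmInit l) t p = encCell c h p := by
  induction hc with
  | refl => exact ⟨0, 0, by simp, fun p => tmInit_spec l p⟩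
  | tail _ h1 ih =>
    obtain ⟨t, h, hh, hp⟩ := ih
    obtain ⟨h', hh', hp'⟩ := encCell_step M h h1
    refine ⟨t + 1, h', ?_, fun p => ?_⟩
    · rw [abs_le] at *
      push_cast
      omega
    · rw [← hp', ← hp, ← hp, ← hp]
      rfl

theorem tm_run (l : List G) (hM : ∀ c, StateTransition.Reaches (TM0.step M) (TM0.init l) c →
      TM0.step M c ≠ none) (t : ℕ) :
    ∃ (c : TM0.Cfg G Q) (h : ℤ), StateTransition.Reaches (TM0.step M) (TM0.init l) c ∧
      ∀ p, cellC (tmRule M) (tmInit l) t p = encCell c h p := by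
  induction t with
  | zero => exact ⟨_, 0, Relation.ReflTransGen.refl, fun p => tmInit_spec l p⟩
  | succ t ih =>
    obtain ⟨c, h, hc, hp⟩ := ih
    obtain ⟨c', hc'⟩ := Option.ne_none_iff_exists'.1 (hM c hc)
    obtain ⟨h', hh', hp'⟩ := encCell_step M h hc'
    refine ⟨c', h', hc.tail hc', fun p => ?_⟩
    rw [← hp', ← hp, ← hp, ← hp]
    rfl

theorem step_none_iff (c : TM0.Cfg G Q) : TM0.step M c = none ↔ M c.q c.Tape.head = none := by
  obtain ⟨q, T⟩ := c
  simp [TM0.step]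

theorem tm_halt_of_dom (l : List G) (h : (StateTransition.eval (TM0.step M) (TM0.init l)).Dom) :
    ∃ t : ℕ, ∃ p : ℤ, |p| ≤ t ∧ tmHalt M (cellC (tmRule M) (tmInit l) t p) := by
  obtain ⟨c, hc⟩ := Part.dom_iff_mem.1 h
  obtain ⟨h1, h2⟩ := StateTransition.mem_eval.1 hc
  obtain ⟨t, h, hh, hp⟩ := tm_reach M l h1
  refine ⟨t, h, hh, c.q, ?_, ?_⟩
  · simp [hp, encCell]
  · rw [hp]
    simpa [encCell] using (step_none_iff M c).1 h2

theorem tm_dom_of_halt (l : List G)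
    (h : ∃ t : ℕ, ∃ p : ℤ, tmHalt M (cellC (tmRule M) (tmInit l) t p)) :
    (StateTransition.eval (TM0.step M) (TM0.init l)).Dom := by
  by_contra hD
  have hM : ∀ c, StateTransition.Reaches (TM0.step M) (TM0.init l) c → TM0.step M c ≠ none :=
    fun c h1 h2 => hD (Part.dom_iff_mem.2 ⟨c, StateTransition.mem_eval.2 ⟨h1, h2⟩⟩)
  obtain ⟨t, p, q, h1, h2⟩ := h
  obtain ⟨c, h, hc, hp⟩ := tm_run M l hM t
  rw [hp] at h1 h2
  simp only [encCell] at h1 h2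
  by_cases hph : p = h
  · subst hph
    simp only [if_true, Option.some.injEq] at h1
    subst h1
    refine hM c hc ((step_none_iff M c).2 ?_)
    simpa using h2
  · simp [hph] at h1

end TuringCA

/-- The reduction from Turing machines to the word game. -/
theorem tm_reduction {G Q : Type} [Inhabited G] [Inhabited Q] [Finite G] [Finite Q]
    [Primcodable G] (M : Turing.TM0.Machine G Q) : ∃ J : List G → WGInstance, Primrec J ∧ ∀ l,
      (WGAttackerWins ((J l).1.map fun p => (FreeGroup.mk p.1, FreeGroup.mk p.2))
        ((J l).2.map fun v => ((FreeGroup.mk v : F2), (1 : F1))) (1 : F2 × F1) ↔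
        (StateTransition.eval (Turing.TM0.step M) (Turing.TM0.init l)).Dom) := by
  obtain ⟨n, ⟨eQ⟩⟩ := Finite.exists_equiv_fin Q
  let _ : Primcodable Q := Primcodable.ofEquiv (Fin n) eQ
  obtain ⟨J, hJ, H⟩ := ca_reduction (tmRule M) (tmHalt M)
  refine ⟨fun l => J (tmInit l), hJ.comp ?_, fun l => ⟨fun h => ?_, fun h => ?_⟩⟩
  · unfold tmInit
    refine Primrec.list_cons.comp (Primrec.pair Primrec.list_headI (Primrec.const _)) ?_
    refine Primrec.list_map Primrec.list_tail ?_
    exact (Primrec.pair Primrec.snd (Primrec.const _)).to₂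
  · exact tm_dom_of_halt M l ((H _).2 h)
  · exact (H _).1 (tm_halt_of_dom M l h)

/-! ### Part 8: a universal machine -/

section Universal

open Turing

theorem tm0_reduction {G Q : Type} [Inhabited G] [Inhabited Q] [Finite G]
    [Primcodable G] (M : TM0.Machine G Q) {S : Set Q} (hS : S.Finite) (ss : TM0.Supports M S) :
    ∃ J : List G → WGInstance, Primrec J ∧ ∀ l,
      (WGAttackerWins ((J l).1.map fun p => (FreeGroup.mk p.1, FreeGroup.mk p.2))
        ((J l).2.map fun v => ((FreeGroup.mk v : F2), (1 : F1))) (1 : F2 × F1) ↔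
        (TM0.eval M l).Dom) := by
  classical
  let _ : Inhabited S := ⟨⟨default, ss.1⟩⟩
  have : Finite S := hS
  let fid : PointedMap G G := ⟨id, rfl⟩
  let g₁ : PointedMap Q S := ⟨fun q => if h : q ∈ S then ⟨q, h⟩ else default, by
    rw [dif_pos ss.1]; rfl⟩
  obtain ⟨J, hJ, H⟩ := tm_reduction (M.map fid fid g₁ (Subtype.val : S → Q))
  refine ⟨J, hJ, fun l => (H l).trans ?_⟩
  have hr := TM0.Machine.map_respects M fid fid g₁ (Subtype.val : S → Q) ss (fun _ => rfl)
    (fun q hq => by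
      change (if h : q ∈ S then (⟨q, h⟩ : S) else default).1 = q
      rw [dif_pos hq])
  have hi : (TM0.init l : TM0.Cfg G Q).q ∈ S ∧
      TM0.Cfg.map fid g₁ (TM0.init l) = (TM0.init l : TM0.Cfg G S) := by
    refine ⟨ss.1, ?_⟩
    rw [TM0.map_init]
    congr 1
    exact List.map_id l
  exact StateTransition.tr_eval_dom hr hi

theorem tm2_reduction {K : Type} [DecidableEq K] [Fintype K] {Γ : K → Type}
    [∀ k, Fintype (Γ k)] {Q σ : Type} [Inhabited Q] [Inhabited σ] [Fintype σ]
    (M : Q → TM2.Stmt Γ Q σ) {S : Finset Q} (ss : TM2.Supports M S) (k : K)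
    [Primcodable (Γ k)] :
    ∃ J : List (Γ k) → WGInstance, Primrec J ∧ ∀ l,
      (WGAttackerWins ((J l).1.map fun p => (FreeGroup.mk p.1, FreeGroup.mk p.2))
        ((J l).2.map fun v => ((FreeGroup.mk v : F2), (1 : F1))) (1 : F2 × F1) ↔
        (TM2.eval M k l).Dom) := by
  have : Finite (TM2to1.Γ' K Γ) := inferInstance
  obtain ⟨n, ⟨eG⟩⟩ := Finite.exists_equiv_fin (TM2to1.Γ' K Γ)
  let _ : Primcodable (TM2to1.Γ' K Γ) := Primcodable.ofEquiv (Fin n) eG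
  have s1 := TM2to1.tr_supports M ss
  have s0 := TM1to0.tr_supports (TM2to1.tr M) s1
  obtain ⟨J, hJ, H⟩ := tm0_reduction _ (Finset.finite_toSet _) s0
  refine ⟨fun l => J (TM2to1.trInit k l), hJ.comp ?_, fun l => ?_⟩
  · let mkF : Γ k → TM2to1.Γ' K Γ := fun a => (false, Function.update (fun _ => none) k (some a))
    let mkT : TM2to1.Γ' K Γ → TM2to1.Γ' K Γ := fun a => (true, a.2)
    have h1 : @Primrec (List (Γ k)) (List (TM2to1.Γ' K Γ)) _ _
        (fun l : List (Γ k) => l.reverse.map mkF) :=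
      Primrec.list_map Primrec.list_reverse ((Primrec.dom_finite mkF).comp Primrec.snd).to₂
    have h2 : @Primrec (List (Γ k)) (List (TM2to1.Γ' K Γ)) _ _
        (fun l : List (Γ k) => mkT (l.reverse.map mkF).headI :: (l.reverse.map mkF).tail) :=
      Primrec.list_cons.comp ((Primrec.dom_finite mkT).comp (Primrec.list_headI.comp h1))
        (Primrec.list_tail.comp h1)
    exact h2
  · rw [H, TM1to0.tr_eval]
    exact TM2to1.tr_eval_dom M k l

open PartrecToTM2 in
instance : Fintype K' := ⟨{.main, .rev, .aux, .stack}, by intro x; cases x <;> simp⟩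

open PartrecToTM2 in
/-- An encoding of the stack alphabet. -/
noncomputable instance : Primcodable Γ' :=
  Primcodable.ofEquiv (Fin (Fintype.card Γ')) (Fintype.equivFin Γ')

open PartrecToTM2 in
theorem trNat_bit (n : ℕ) (hn : n ≠ 0) :
    trNat n = (if n % 2 = 0 then Γ'.bit0 else Γ'.bit1) :: trNat (n / 2) := by
  obtain ⟨k, rfl⟩ : ∃ k : Num, n = (k : ℕ) := ⟨n, (Num.to_of_nat n).symm⟩
  have hp : ∀ p : PosNum, trNat (p : ℕ) = trPosNum p := fun p => by
    unfold trNat; rw [PosNum.of_to_nat]; rfl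
  cases k with
  | zero => exact absurd rfl hn
  | pos p =>
    have e : ((Num.pos p : Num) : ℕ) = (p : ℕ) := rfl
    rw [e, hp]
    cases p with
    | one => rfl
    | bit0 q =>
      have h : ((PosNum.bit0 q : PosNum) : ℕ) = q + q := PosNum.cast_bit0 q
      rw [h, if_pos (by omega), show ((q : ℕ) + q) / 2 = q by omega, hp]
      rfl
    | bit1 q =>
      have h : ((PosNum.bit1 q : PosNum) : ℕ) = q + q + 1 := PosNum.cast_bit1 q
      rw [h, if_neg (by omega), show ((q : ℕ) + q + 1) / 2 = q by omega, hp]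
      rfl

open PartrecToTM2 in
theorem trNat_primrec : Primrec trNat := by
  have : Primrec₂ (fun (_ : Unit) (n : ℕ) => trNat n) := by
    refine Primrec.nat_strong_rec _ (g := fun _ L => some (if L.length = 0 then [] else
      (if L.length % 2 = 0 then Γ'.bit0 else Γ'.bit1) :: L.getI (L.length / 2))) ?_ ?_
    · have hl : Primrec (fun y : Unit × List (List Γ') => y.2.length) :=
        Primrec.list_length.comp Primrec.snd
      change Primrec (fun y : Unit × List (List Γ') => some (if y.2.length = 0 then [] else
        (if y.2.length % 2 = 0 then Γ'.bit0 else Γ'.bit1) :: y.2.getI (y.2.length / 2)))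
      refine Primrec.option_some.comp (Primrec.ite (Primrec.eq.comp hl (Primrec.const 0))
        (Primrec.const _) (Primrec.list_cons.comp (Primrec.ite (Primrec.eq.comp
          (Primrec.nat_mod.comp hl (Primrec.const 2)) (Primrec.const 0)) (Primrec.const _)
          (Primrec.const _)) (Primrec.list_getI.comp Primrec.snd
            (Primrec.nat_div.comp hl (Primrec.const 2)))))
    · intro _ n
      by_cases hn : n = 0
      · subst hn; simp
      · have : n / 2 < n := by omega
        rw [trNat_bit n hn]
        simp [hn, List.getI_eq_getElem, this]
  exact this.comp (Primrec.const ()) Primrec.id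

open PartrecToTM2 in
theorem code_reduction (c : ToPartrec.Code) : ∃ J : ℕ → WGInstance, Primrec J ∧ ∀ n,
      (WGAttackerWins ((J n).1.map fun p => (FreeGroup.mk p.1, FreeGroup.mk p.2))
        ((J n).2.map fun v => ((FreeGroup.mk v : F2), (1 : F1))) (1 : F2 × F1) ↔
        (c.eval [n]).Dom) := by
  have hs := tr_supports c Cont'.halt
  obtain ⟨J, hJ, H⟩ := @tm2_reduction _ _ _ _ _ _ _ ⟨trNormal c Cont'.halt⟩ _ _ _ _ hs K'.main _
  refine ⟨fun n => J (trList [n]), hJ.comp ?_, fun n => (H _).trans ?_⟩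
  · change Primrec (fun n => trNat n ++ Γ'.cons :: [])
    exact Primrec.list_append.comp trNat_primrec (Primrec.const _)
  · have h1 : @TM2.init _ _ _ _ ⟨trNormal c Cont'.halt⟩ _ _ K'.main (trList [n]) =
        init c [n] := by
      unfold TM2.init init
      congr 1
      funext x; cases x <;> rfl
    have h2 := tr_eval c [n]
    rw [← h1] at h2
    change (StateTransition.eval _ _).Dom ↔ _
    rw [h2]
    rfl

end Universal

/-- It is undecidable whether Attacker has a winning strategy in the Word Game on pairs of
group words when the initial position is the pair of empty words `(1, 1)`. -/
theorem word_game_pairs_from_identity_undecidable :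
    ¬ ComputablePred (fun inst : WGInstance =>
      WGAttackerWins (inst.1.map fun p => (FreeGroup.mk p.1, FreeGroup.mk p.2))
        (inst.2.map fun v => ((FreeGroup.mk v : F2), (1 : F1)))
        (1 : F2 × F1)) := by
  intro hcomp
  have hU : Partrec (fun v : List.Vector ℕ 1 =>
      (Denumerable.ofNat Nat.Partrec.Code v.head).eval 0) := by
    refine Nat.Partrec.Code.eval_part.comp ?_ (Computable.const 0)
    exact (Primrec.ofNat _).to_comp.comp Primrec.vector_head.to_comp
  obtain ⟨c, hc⟩ := Turing.ToPartrec.Code.exists_code (Nat.Partrec'.part_iff.2 hU)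
  obtain ⟨J, hJ, H⟩ := code_reduction c
  apply ComputablePred.halting_problem 0
  refine ComputablePred.computable_of_manyOneReducible
    ⟨fun a => J (Encodable.encode a), hJ.to_comp.comp Computable.encode, fun a => ?_⟩ hcomp
  rw [H]
  have := hc ⟨[Encodable.encode a], rfl⟩
  change c.eval [Encodable.encode a] = _ at this
  rw [this]
  have e : (List.Vector.head (⟨[Encodable.encode a], rfl⟩ : List.Vector ℕ 1)) =
    Encodable.encode a := rfl
  rw [e, Denumerable.ofNat_encode]
  rfl
end

section
/- Let F_l be the free group on generators z₁, …, z_l, let α : F_l → F₂ be the homomorphism with α(z_i) = c^i d c^{−i} into the free group F₂ on generators c, d, and let f : F₂ → SL(2, ℤ) be the homomorphism with f(c) = [[1, 2], [0, 1]] and f(d) = [[1, 0], [2, 1]]. For every w ∈ F_l, if the matrix M = f(α(w)) satisfies M · (0, 1)ᵀ = (0, 1)ᵀ, then M is the 2×2 identity matrix. -/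
/-- The group homomorphism `α : F_l → F₂` determined on the generators by
`α(z_i) = c^i d c^{−i}` for `1 ≤ i ≤ l`. -/
noncomputable def alphaHom (l : ℕ) : FreeGroup (Fin l) →* F2 :=
  FreeGroup.lift fun i : Fin l =>
    (FreeGroup.of false) ^ ((i : ℕ) + 1) * FreeGroup.of true *
      ((FreeGroup.of false) ^ ((i : ℕ) + 1))⁻¹

/-- The matrix `[[1, 2], [0, 1]]` as an element of `SL(2, ℤ)`. -/
def cMat : Matrix.SpecialLinearGroup (Fin 2) ℤ :=
  ⟨!![1, 2; 0, 1], by norm_num [Matrix.det_fin_two_of]⟩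

/-- The matrix `[[1, 0], [2, 1]]` as an element of `SL(2, ℤ)`. -/
def dMat : Matrix.SpecialLinearGroup (Fin 2) ℤ :=
  ⟨!![1, 0; 2, 1], by norm_num [Matrix.det_fin_two_of]⟩

/-- The group homomorphism `f : F₂ → SL(2, ℤ)` determined by `f(c) = [[1, 2], [0, 1]]` and
`f(d) = [[1, 0], [2, 1]]`. -/
noncomputable def fHom : F2 →* Matrix.SpecialLinearGroup (Fin 2) ℤ :=
  FreeGroup.lift fun b : Bool => if b then dMat else cMat

namespace FixAux

/-- the ping-pong region attached to a letter -/
def Region (n : ℤ) (b : Bool) (v : Fin 2 → ℤ) : Prop :=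
  (v 0 - 2 * n * v 1) ^ 2 < v 1 ^ 2 ∧ 0 < (if b then 1 else -1) * ((v 0 - 2 * n * v 1) * v 1)

lemma cpow (n : ℕ) : ((cMat ^ n : Matrix.SpecialLinearGroup (Fin 2) ℤ) : Matrix (Fin 2) (Fin 2) ℤ)
    = !![1, 2 * (n : ℤ); 0, 1] := by
  induction n with
  | zero => ext i j; fin_cases i <;> fin_cases j <;> simp
  | succ n ih =>
    rw [pow_succ, Matrix.SpecialLinearGroup.coe_mul, ih]
    simp only [cMat]
    ext i j
    fin_cases i <;> fin_cases j <;> simp [Matrix.mul_apply, Fin.sum_univ_two] <;> ring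

/-- image of a letter -/
lemma letter (l : ℕ) (i : Fin l) (b : Bool) :
    ((fHom (alphaHom l (FreeGroup.mk [(i, b)])) : Matrix.SpecialLinearGroup (Fin 2) ℤ) :
      Matrix (Fin 2) (Fin 2) ℤ) =
    (!![1, 2 * (((i : ℕ) + 1 : ℕ) : ℤ); 0, 1] : Matrix (Fin 2) (Fin 2) ℤ) *
      !![1, 0; 2 * (if b then 1 else -1), 1] * !![1, -(2 * (((i : ℕ) + 1 : ℕ) : ℤ)); 0, 1] := by
  have hadj : (((cMat ^ ((i : ℕ) + 1))⁻¹ : Matrix.SpecialLinearGroup (Fin 2) ℤ) :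
      Matrix (Fin 2) (Fin 2) ℤ) = !![1, -(2 * (((i : ℕ) + 1 : ℕ) : ℤ)); 0, 1] := by
    rw [Matrix.SpecialLinearGroup.coe_inv, cpow, Matrix.adjugate_fin_two_of]
    simp
  have hd : ((dMat⁻¹ : Matrix.SpecialLinearGroup (Fin 2) ℤ) :
      Matrix (Fin 2) (Fin 2) ℤ) = !![1, 0; -2, 1] := by
    rw [Matrix.SpecialLinearGroup.coe_inv, dMat, Matrix.adjugate_fin_two_of]
    simp
  cases b with
  | true =>
    have : fHom (alphaHom l (FreeGroup.mk [(i, true)])) =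
        cMat ^ ((i : ℕ) + 1) * dMat * (cMat ^ ((i : ℕ) + 1))⁻¹ := by
      simp [fHom, alphaHom]
    rw [this, Matrix.SpecialLinearGroup.coe_mul, Matrix.SpecialLinearGroup.coe_mul, hadj, cpow]
    simp [dMat]
  | false =>
    have : fHom (alphaHom l (FreeGroup.mk [(i, false)])) =
        cMat ^ ((i : ℕ) + 1) * dMat⁻¹ * (cMat ^ ((i : ℕ) + 1))⁻¹ := by
      simp [fHom, alphaHom, mul_assoc]
    rw [this, Matrix.SpecialLinearGroup.coe_mul, Matrix.SpecialLinearGroup.coe_mul, hadj, cpow, hd]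
    simp

/-- ping: a letter sends everything outside the closed strip into its region -/
lemma ping (a q e : ℤ) (he : e = 1 ∨ e = -1) (h : q ^ 2 < a ^ 2 ∨ (a ^ 2 < q ^ 2 ∧ 0 < e * (a * q))) :
    a ^ 2 < (q + 2 * e * a) ^ 2 ∧ 0 < e * (a * (q + 2 * e * a)) := by
  have he2 : e * e = 1 := by rcases he with rfl | rfl <;> norm_num
  rcases h with h | ⟨h, h'⟩
  · have h1 : 0 < a ^ 2 + e * (a * q) := by
      rcases he with rfl | rfl
      · nlinarith [sq_nonneg (a + q)]
      · nlinarith [sq_nonneg (a - q)]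
    have h0 : |q| < |a| := sq_lt_sq.mp h
    constructor
    · rw [sq_lt_sq]
      rcases he with rfl | rfl <;> grind
    · nlinarith [sq_nonneg q, sq_nonneg a]
  · constructor
    · nlinarith [sq_nonneg a]
    · nlinarith [sq_nonneg a]

lemma pong (a q k : ℤ) (hk : k ≠ 0) (h : a ^ 2 < q ^ 2) : q ^ 2 < (a + 2 * k * q) ^ 2 := by
  rw [sq_lt_sq] at *
  have h1 : 1 ≤ |k| := Int.one_le_abs hk
  have h2 : |2 * k * q| = 2 * |k| * |q| := by simp [abs_mul]
  have h3 : |2 * k * q| ≤ |a + 2 * k * q| + |a| := by grind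
  nlinarith [abs_nonneg q, abs_nonneg a]

lemma region_letter (l : ℕ) (i : Fin l) (b : Bool) (v : Fin 2 → ℤ)
    (h : v 1 ^ 2 < (v 0 - 2 * ((i : ℕ) + 1 : ℕ) * v 1) ^ 2 ∨ Region ((i : ℕ) + 1 : ℕ) b v) :
    Region ((i : ℕ) + 1 : ℕ) b
      (((fHom (alphaHom l (FreeGroup.mk [(i, b)])) : Matrix.SpecialLinearGroup (Fin 2) ℤ) :
      Matrix (Fin 2) (Fin 2) ℤ).mulVec v) := by
  rw [letter]
  have := ping _ _ (if b then 1 else -1) (by cases b <;> simp) h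
  generalize (((i : ℕ) + 1 : ℕ) : ℤ) = n at *
  rw [← Matrix.mulVec_mulVec, ← Matrix.mulVec_mulVec]
  unfold Region at *
  generalize (if b = true then 1 else -1 : ℤ) = e at *
  simp only [Matrix.mulVec, dotProduct, Fin.sum_univ_two, Matrix.of_apply, Matrix.cons_val_zero,
    Matrix.cons_val_one]
  convert this using 2 <;> ring

lemma main (l : ℕ) (t : List (Fin l × Bool)) : ∀ x : Fin l × Bool, FreeGroup.IsReduced (x :: t) →
    Region ((x.1 : ℕ) + 1 : ℕ) x.2
      (((fHom (alphaHom l (FreeGroup.mk (x :: t))) : Matrix.SpecialLinearGroup (Fin 2) ℤ) :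
      Matrix (Fin 2) (Fin 2) ℤ).mulVec ![0, 1]) := by
  induction t with
  | nil =>
    rintro ⟨i, b⟩ -
    apply region_letter
    left
    simp
    grind
  | cons y t ih =>
    rintro ⟨i, b⟩ h
    obtain ⟨j, c⟩ := y
    rw [FreeGroup.IsReduced, List.isChain_cons_cons] at h
    have hr := ih _ h.2
    have e : (FreeGroup.mk ((i, b) :: (j, c) :: t)) =
      FreeGroup.mk [(i, b)] * FreeGroup.mk ((j, c) :: t) := by simp [FreeGroup.mul_mk]
    rw [e, map_mul, map_mul, Matrix.SpecialLinearGroup.coe_mul, ← Matrix.mulVec_mulVec]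
    apply region_letter
    by_cases hij : i = j
    · subst hij
      have := h.1 rfl
      simp only at this
      subst this
      exact Or.inr hr
    · left
      have := pong _ _ ((j : ℤ) - i) (by
        intro h0
        apply hij
        ext
        omega) hr.1
      convert this using 2
      push_cast
      ring

end FixAux

/-- For every `w ∈ F_l`, if the matrix `M = f(α(w))` fixes the column vector `(0, 1)ᵀ`,
then `M` is the `2 × 2` identity matrix. -/
theorem fixes_basis_vector_implies_identity (l : ℕ) (w : FreeGroup (Fin l))
    (hM : ((fHom (alphaHom l w) : Matrix (Fin 2) (Fin 2) ℤ)).mulVec ![0, 1] = ![0, 1]) :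
    ((fHom (alphaHom l w) : Matrix (Fin 2) (Fin 2) ℤ)) = 1 := by
  have hw : w = 1 := by
    have hred : FreeGroup.IsReduced w.toWord := FreeGroup.isReduced_toWord
    rcases hL : w.toWord with _ | ⟨x, t⟩
    · exact FreeGroup.toWord_eq_nil_iff.mp hL
    · exfalso
      rw [hL] at hred
      have := (FixAux.main l t x hred).1
      rw [← hL, FreeGroup.mk_toWord, hM] at this
      simp at this
      grind
  subst hw
  simp
end

section
/- Let F_l be the free group on generators z₁, …, z_l, let α : F_l → F₂ be the homomorphism with α(z_i) = c^i d c^{−i} into the free group F₂ on generators c, d, and let f : F₂ → SL(2, ℤ) be the homomorphism with f(c) = [[1, 2], [0, 1]] and f(d) = [[1, 0], [2, 1]]. For every w ∈ F_l, the bottom-right (2, 2) entry of the matrix f(α(w)) is congruent to 1 modulo 4. -/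
/-- The Sanov subgroup: diagonal entries `1 mod 4`, off-diagonal entries even. -/
def sanovSubgroup : Subgroup (Matrix.SpecialLinearGroup (Fin 2) ℤ) where
  carrier := {A | (∃ k, A.1 0 0 = 4 * k + 1) ∧ (∃ k, A.1 1 1 = 4 * k + 1) ∧
    (∃ k, A.1 0 1 = 2 * k) ∧ (∃ k, A.1 1 0 = 2 * k)}
  one_mem' := ⟨⟨0, by simp⟩, ⟨0, by simp⟩, ⟨0, by simp⟩, ⟨0, by simp⟩⟩
  mul_mem' := by
    rintro A B ⟨⟨a, ha⟩, ⟨d, hd⟩, ⟨b, hb⟩, ⟨c, hc⟩⟩ ⟨⟨a', ha'⟩, ⟨d', hd'⟩, ⟨b', hb'⟩, ⟨c', hc'⟩⟩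
    refine ⟨⟨4 * a * a' + a + a' + b * c', ?_⟩, ⟨4 * d * d' + d + d' + c * b', ?_⟩,
      ⟨(4 * a + 1) * b' + b * (4 * d' + 1), ?_⟩, ⟨c * (4 * a' + 1) + (4 * d + 1) * c', ?_⟩⟩ <;>
    · change (A.1 * B.1) _ _ = _
      rw [Matrix.mul_apply, Fin.sum_univ_two]
      simp only [ha, hb, hc, hd, ha', hb', hc', hd']
      ring
  inv_mem' := by
    rintro A ⟨⟨a, ha⟩, ⟨d, hd⟩, ⟨b, hb⟩, ⟨c, hc⟩⟩
    refine ⟨⟨d, ?_⟩, ⟨a, ?_⟩, ⟨-b, ?_⟩, ⟨-c, ?_⟩⟩ <;>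
    · rw [Matrix.SpecialLinearGroup.SL2_inv_expl]
      simp [ha, hb, hc, hd]

theorem fHom_mem_sanov (w : F2) : fHom w ∈ sanovSubgroup := by
  induction w using FreeGroup.induction_on with
  | C1 => rw [map_one]; exact one_mem _
  | of b =>
    cases b
    · refine ⟨⟨0, ?_⟩, ⟨0, ?_⟩, ⟨1, ?_⟩, ⟨0, ?_⟩⟩ <;> simp [fHom, cMat]
    · refine ⟨⟨0, ?_⟩, ⟨0, ?_⟩, ⟨0, ?_⟩, ⟨1, ?_⟩⟩ <;> simp [fHom, dMat]
  | inv_of b h => rw [map_inv]; exact inv_mem h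
  | mul x y hx hy => rw [map_mul]; exact mul_mem hx hy

/-- For every `w ∈ F_l`, the bottom-right entry of the matrix `f(α(w))` is congruent to `1`
modulo `4`. -/
theorem bottom_right_entry_congruent_one_mod_four (l : ℕ) (w : FreeGroup (Fin l)) :
    ((fHom (alphaHom l w) : Matrix (Fin 2) (Fin 2) ℤ)) 1 1 ≡ 1 [ZMOD 4] := by
  obtain ⟨-, ⟨k, hk⟩, -, -⟩ := fHom_mem_sanov (alphaHom l w)
  rw [hk, Int.ModEq]
  omega
end
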